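/- arXiv:2507.03338 — 3 statements merged into one kernel-verified Lean document; each statement's English description precedes it below -/
import Mathlib

section
/- Let k ∈ ℕ and τ ∈ ((k−1)/k, 1]. Then there exist c, N > 0 depending only on k and τ such that the following holds. For any finite set Z with |Z| ≥ N, if for each equidistributed map ψ : Z → {1,...,k} (i.e., ||ψ⁻¹(j)| − |Z|/k| < 1 for all j) one chooses a subset Z_ψ ⊆ Z with |Z_ψ| ≥ τ|Z|, then there is some J ⊆ Z with |J| ≥ c|Z| such that every map σ : J → {1,...,k} extends to an equidistributed map ψ : Z → {1,...,k} with J ⊆ Z_ψ. -/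
/-- A map `ψ : Z → {1,…,k}` is equidistributed if every fiber has cardinality within `1`
of `|Z|/k`. -/
def Equidistributed {Z : Type*} [Fintype Z] (k : ℕ) (ψ : Z → Fin k) : Prop :=
  ∀ j : Fin k,
    |((Finset.univ.filter fun z => ψ z = j).card : ℝ) - (Fintype.card Z : ℝ) / k| < 1

open Finset in
open Classical in
theorem core_aux {α Z : Type} (k : ℕ) (hk : 2 ≤ k) (f : α → Z → Option (Fin k))
    (m : ℕ) (β : ℝ) (hβ0 : 0 ≤ β) (hβ1 : β ≤ 1) (hβ : 1 ≤ β * ((k:ℝ)/((k:ℝ)-1))^m) (M : ℝ) :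
    ∀ W : Finset Z, ∀ S : Finset α,
      (∀ i : Z → Fin k, ((S.filter fun ψ => ∀ z ∈ W, f ψ z ≠ some (i z)).card : ℝ) ≤ M) →
      (1-β)^W.card * S.card ≤
        M * ((W.powerset.filter fun J => ∀ σ : Z → Fin k, ∃ ψ ∈ S, ∀ z ∈ J, f ψ z = some (σ z)).card : ℝ)^m := by
  have : NeZero k := ⟨by omega⟩
  intro W
  induction W using Finset.induction_on with
  | empty =>
    intro S hS
    have h := hS (fun _ => 0)
    simp only [notMem_empty, false_imp_iff, implies_true, filter_true] at h
    rcases S.eq_empty_or_nonempty with rfl | hne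
    · simp at h ⊢
      positivity
    · have : ((∅ : Finset Z).powerset.filter fun J => ∀ σ : Z → Fin k, ∃ ψ ∈ S, ∀ z ∈ J, f ψ z = some (σ z)) = {∅} := by
        ext J
        simp only [powerset_empty, mem_filter, mem_singleton]
        constructor
        · exact fun h => h.1
        · rintro rfl
          refine ⟨rfl, fun σ => ?_⟩
          obtain ⟨ψ, hψ⟩ := hne
          exact ⟨ψ, hψ, by simp⟩
      rw [this]
      simpa using h
  | insert z W hz ih =>
    intro S hS
    have hM : 0 ≤ M := le_trans (Nat.cast_nonneg _) (hS (fun _ => 0))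
    by_cases hb : ∃ i : Fin k, ((S.filter fun ψ => f ψ z = some i).card : ℝ) < β * S.card
    · obtain ⟨i, hi⟩ := hb
      have h1 := ih (S.filter fun ψ => ¬ f ψ z = some i) (by
        intro j
        refine le_trans ?_ (hS (Function.update j z i))
        norm_cast
        apply card_le_card
        intro ψ
        simp only [mem_filter, mem_insert]
        rintro ⟨⟨a, b⟩, c⟩
        refine ⟨a, ?_⟩
        rintro y (rfl | hy)
        · simpa using b
        · have : y ≠ z := fun h => hz (h ▸ hy)
          simpa [Function.update_of_ne this] using c y hy)
      have h2 := S.card_filter_add_card_filter_not (fun ψ => f ψ z = some i)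
      have h3 : (1-β) * S.card ≤ ((S.filter fun ψ => ¬ f ψ z = some i).card : ℝ) := by
        have : ((S.filter fun ψ => f ψ z = some i).card : ℝ) + ((S.filter fun ψ => ¬ f ψ z = some i).card : ℝ) = S.card := by
          exact_mod_cast h2
        linarith
      rw [card_insert_of_notMem hz, pow_succ, mul_assoc]
      refine le_trans (mul_le_mul_of_nonneg_left h3 (pow_nonneg (by linarith) _)) (h1.trans ?_)
      gcongr 1
      apply pow_le_pow_left₀ (by positivity)
      norm_cast
      apply card_le_card
      intro J
      simp only [mem_filter, mem_powerset]
      rintro ⟨a, b⟩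
      refine ⟨a.trans (subset_insert _ _), fun σ => ?_⟩
      obtain ⟨ψ, h, h'⟩ := b σ
      exact ⟨ψ, h.1, h'⟩
    · push Not at hb
      set T : Fin k → Finset α := fun i => S.filter fun ψ => f ψ z = some i with hT
      set A : Fin k → Finset (Finset Z) := fun i => W.powerset.filter fun J => ∀ σ : Z → Fin k, ∃ ψ ∈ T i, ∀ z ∈ J, f ψ z = some (σ z) with hA
      have h1 : ∀ i, (1-β)^W.card * (T i).card ≤ M * ((A i).card : ℝ)^m := by
        intro i
        apply ih
        intro j
        obtain ⟨i', hi'⟩ : ∃ i' : Fin k, i' ≠ i := by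
          have : Nontrivial (Fin k) := Fin.nontrivial_iff_two_le.2 hk
          exact exists_ne i
        refine le_trans ?_ (hS (Function.update j z i'))
        norm_cast
        apply card_le_card
        intro ψ
        simp only [hT, mem_filter, mem_insert]
        rintro ⟨⟨a, b⟩, c⟩
        refine ⟨a, ?_⟩
        rintro y (rfl | hy)
        · simp [b, hi'.symm]
        · have : y ≠ z := fun h => hz (h ▸ hy)
          simpa [Function.update_of_ne this] using c y hy
      set R := (insert z W).powerset.filter fun J => ∀ σ : Z → Fin k, ∃ ψ ∈ S, ∀ z ∈ J, f ψ z = some (σ z) with hR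
      set U := Finset.univ.biUnion A with hU
      set I := U.filter (fun J => ∀ i, J ∈ A i) with hI
      have hUW : ∀ J ∈ U, z ∉ J := by
        intro J hJ hzJ
        simp only [hU, hA, mem_biUnion, mem_filter, mem_powerset] at hJ
        obtain ⟨i, -, h, -⟩ := hJ
        exact hz (h hzJ)
      have hsub : U ∪ I.image (insert z) ⊆ R := by
        intro J hJ
        rcases mem_union.1 hJ with h | h
        · simp only [hU, hA, hT, mem_biUnion, mem_filter, mem_powerset] at h
          obtain ⟨i, -, h, h'⟩ := h
          simp only [hR, mem_filter, mem_powerset]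
          refine ⟨h.trans (subset_insert _ _), fun σ => ?_⟩
          obtain ⟨ψ, g, g'⟩ := h' σ
          exact ⟨ψ, g.1, g'⟩
        · obtain ⟨J', hJ', rfl⟩ := mem_image.1 h
          have h2 := (mem_filter.1 hJ').2
          simp only [hA, hT, mem_filter, mem_powerset] at h2
          simp only [hR, mem_filter, mem_powerset]
          refine ⟨insert_subset_insert _ (h2 0).1, fun σ => ?_⟩
          obtain ⟨ψ, g, g'⟩ := (h2 (σ z)).2 σ
          refine ⟨ψ, g.1, ?_⟩
          intro y hy
          rcases mem_insert.1 hy with rfl | hy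
          · exact g.2
          · exact g' y hy
      have hcard : U.card + I.card ≤ R.card := by
        rw [← card_image_of_injOn (f := insert z) (s := I), ← card_union_of_disjoint]
        · exact card_le_card hsub
        · rw [disjoint_left]
          intro J hJ hJ'
          obtain ⟨J', _, rfl⟩ := mem_image.1 hJ'
          exact hUW _ hJ (mem_insert_self _ _)
        · intro J hJ J' hJ' h
          have a := hUW J (mem_filter.1 hJ).1
          have b := hUW J' (mem_filter.1 hJ').1
          have := congrArg (fun s => s.erase z) h
          simpa [erase_insert a, erase_insert b] using this
      have hsum : ∑ i, (A i).card ≤ (k-1) * U.card + I.card := by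
        have e1 : ∀ i, (A i).card = ∑ J ∈ U, if J ∈ A i then 1 else 0 := by
          intro i
          rw [← card_filter]
          congr 1
          ext J
          simp only [mem_filter]
          exact ⟨fun h => ⟨mem_biUnion.2 ⟨i, mem_univ _, h⟩, h⟩, fun h => h.2⟩
        simp_rw [e1]
        rw [sum_comm, hI, card_filter, mul_comm, ← smul_eq_mul, ← sum_const, ← sum_add_distrib]
        apply sum_le_sum
        intro J _
        rw [← card_filter]
        split_ifs with h
        · refine (card_le_univ _).trans ?_
          simp; omega
        · push Not at h
          obtain ⟨i, hi⟩ := h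
          have : (univ.filter fun i => J ∈ A i) ⊆ univ.erase i := by
            intro j hj
            simp only [mem_erase, mem_univ, and_true]
            rintro rfl
            exact hi (mem_filter.1 hj).2
          have := card_le_card this
          simpa using this
      obtain ⟨i0, -, hi0⟩ := exists_min_image univ (fun i => (A i).card) univ_nonempty
      have hk' : k * (A i0).card ≤ (k-1) * R.card := by
        calc k * (A i0).card = ∑ i : Fin k, (A i0).card := by simp
          _ ≤ ∑ i, (A i).card := sum_le_sum hi0
          _ ≤ (k-1) * U.card + I.card := hsum
          _ ≤ (k-1) * U.card + (k-1) * I.card := by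
            gcongr; apply Nat.le_mul_of_pos_left; omega
          _ = (k-1) * (U.card + I.card) := by ring
          _ ≤ _ := Nat.mul_le_mul_left _ hcard
      have hkR : (k:ℝ)/((k:ℝ)-1) * (A i0).card ≤ R.card := by
        have h2 : (0:ℝ) < (k:ℝ) - 1 := by
          have : (2:ℝ) ≤ k := by exact_mod_cast hk
          linarith
        rw [div_mul_eq_mul_div, div_le_iff₀ h2]
        have : ((k * (A i0).card : ℕ):ℝ) ≤ (((k-1) * R.card : ℕ) : ℝ) := by exact_mod_cast hk'
        push_cast [Nat.cast_sub (show 1 ≤ k by omega)] at this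
        linarith
      have hq : (0:ℝ) ≤ (k:ℝ)/((k:ℝ)-1) := by
        have : (2:ℝ) ≤ k := by exact_mod_cast hk
        apply div_nonneg <;> linarith
      rw [card_insert_of_notMem hz]
      have g0 : (0:ℝ) ≤ (1-β)^W.card := pow_nonneg (by linarith) _
      calc (1-β)^(W.card+1) * S.card ≤ (1-β)^W.card * S.card := by
            gcongr 1
            exact pow_le_pow_of_le_one (by linarith) (by linarith) (by omega)
        _ ≤ (1-β)^W.card * S.card * (β * ((k:ℝ)/((k:ℝ)-1))^m) := le_mul_of_one_le_right (by positivity) hβ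
        _ = (1-β)^W.card * (β * S.card) * ((k:ℝ)/((k:ℝ)-1))^m := by ring
        _ ≤ (1-β)^W.card * (T i0).card * ((k:ℝ)/((k:ℝ)-1))^m := by
            gcongr; exact hb i0
        _ ≤ M * ((A i0).card : ℝ)^m * ((k:ℝ)/((k:ℝ)-1))^m := by
            exact mul_le_mul_of_nonneg_right (h1 i0) (pow_nonneg hq _)
        _ = M * ((k:ℝ)/((k:ℝ)-1) * (A i0).card)^m := by rw [mul_pow]; ring
        _ ≤ M * (R.card:ℝ)^m := by gcongr

theorem bal_prod_le (k : ℕ) (hk : 1 ≤ k) (n : ℕ) :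
    k ^ n * ∏ j ∈ Finset.range k, ((n + j) / k).factorial ≤ (n + k).factorial := by
  induction n with
  | zero =>
    rw [Finset.prod_eq_one]
    · simpa using Nat.succ_le_of_lt (Nat.factorial_pos k)
    · intro j hj
      rw [zero_add, Nat.div_eq_of_lt (Finset.mem_range.1 hj)]; rfl
  | succ n ih =>
    have h : ∏ j ∈ Finset.range k, ((n + 1 + j) / k).factorial
        = (∏ j ∈ Finset.range k, ((n + j) / k).factorial) * (n / k + 1) := by
      have a := Finset.prod_range_succ (fun j => ((n + j) / k).factorial) k
      rw [Finset.prod_range_succ'] at a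
      simp only [add_zero] at a
      have e : (n + k) / k = n / k + 1 := Nat.add_div_right _ (by omega)
      rw [e, Nat.factorial_succ] at a
      have hp := Nat.factorial_pos (n / k)
      apply Nat.eq_of_mul_eq_mul_right hp
      rw [show ∏ j ∈ Finset.range k, ((n + 1 + j) / k).factorial = ∏ j ∈ Finset.range k, ((n + (j + 1)) / k).factorial from
        Finset.prod_congr rfl (fun j _ => by congr 2; ring), a]
      ring
    rw [h, show n + 1 + k = (n + k) + 1 by ring, Nat.factorial_succ, pow_succ]
    have h2 : k * (n / k + 1) ≤ n + k + 1 := by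
      have := Nat.mul_div_le n k
      rw [mul_add]; omega
    calc _ = (k * (n / k + 1)) * (k ^ n * ∏ j ∈ Finset.range k, ((n + j) / k).factorial) := by ring
      _ ≤ _ := Nat.mul_le_mul h2 ih

theorem div_shift (k n j : ℕ) (hj : j < k) :
    (n + (k - 1 - j)) / k = n / k + if j < n % k then 1 else 0 := by
  have h := Nat.div_add_mod n k
  have hm := Nat.mod_lt n (show 0 < k by omega)
  conv_lhs => rw [← h]
  rw [add_assoc, Nat.mul_add_div (by omega)]
  congr 1
  split_ifs with h1
  · rw [Nat.div_eq_iff (by omega)]; omega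
  · rw [Nat.div_eq_iff (by omega)]; omega

open Classical in
theorem equi_count (k : ℕ) (hk : 1 ≤ k) (Z : Type) [Fintype Z] :
    k ^ Fintype.card Z ≤ (Finset.univ.filter fun ψ : Z → Fin k => Equidistributed k ψ).card
      * (Fintype.card Z + k) ^ k := by
  set n := Fintype.card Z with hn
  let e := Fintype.equivFin Z
  let ψ0 : Z → Fin k := fun z => ⟨(e z : ℕ) % k, Nat.mod_lt _ hk⟩
  have hfib : ∀ j : Fin k, Fintype.card {z // ψ0 z = j} = n / k + if (j:ℕ) < n % k then 1 else 0 := by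
    intro j
    have h := Nat.count_modEq_card n hk (j:ℕ)
    rw [Nat.mod_eq_of_lt j.2] at h
    rw [← h, Nat.count_eq_card_filter_range, Fintype.card_subtype]
    apply Finset.card_bij (fun z _ => (e z : ℕ))
    · intro z hz
      have := (Finset.mem_filter.1 hz).2
      have h2 : (e z : ℕ) % k = j := congrArg Fin.val this
      simp only [Finset.mem_filter, Finset.mem_range]
      exact ⟨(e z).2, by rw [Nat.ModEq, h2, Nat.mod_eq_of_lt j.2]⟩
    · intro a _ b _ h
      exact e.injective (Fin.ext h)
    · intro b hb
      simp only [Finset.mem_filter, Finset.mem_range] at hb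
      refine ⟨e.symm ⟨b, hb.1⟩, ?_, by simp⟩
      simp only [Finset.mem_filter, Finset.mem_univ, true_and, ψ0, Equiv.apply_symm_apply]
      apply Fin.ext
      simpa [Nat.ModEq, Nat.mod_eq_of_lt j.2] using hb.2
  have hE : ∀ g : Equiv.Perm Z, Equidistributed k (ψ0 ∘ g) := by
    intro g j
    have : (Finset.univ.filter fun z => (ψ0 ∘ g) z = j).card = n / k + if (j:ℕ) < n % k then 1 else 0 := by
      rw [← hfib j, ← Fintype.card_subtype]
      exact Fintype.card_congr (g.subtypeEquiv (fun a => Iff.rfl))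
    rw [this, ← hn]
    have hk0 : (0:ℝ) < k := by exact_mod_cast hk
    have h := Nat.div_add_mod n k
    have hm := Nat.mod_lt n (show 0 < k by omega)
    have h' : (n:ℝ) = k * ((n / k : ℕ):ℝ) + ((n % k : ℕ) : ℝ) := by exact_mod_cast h.symm
    have hm' : ((n % k : ℕ) : ℝ) < k := by exact_mod_cast hm
    have e1 : (n:ℝ) / k = ((n / k : ℕ):ℝ) + ((n % k : ℕ) : ℝ) / k := by
      conv_lhs => rw [h']
      field_simp
    have e2 : ((n % k : ℕ) : ℝ) / k < 1 := by rw [div_lt_one hk0]; exact hm'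
    have e3 : 0 ≤ ((n % k : ℕ) : ℝ) / k := by positivity
    rw [e1, abs_lt]
    split_ifs with h1
    · have e4 : 0 < ((n % k : ℕ) : ℝ) / k := by
        apply div_pos _ hk0
        exact_mod_cast (show 0 < n % k by omega)
      push_cast
      constructor <;> linarith
    · push_cast
      constructor <;> linarith
  set B := ∏ j ∈ Finset.range k, ((n + j) / k).factorial with hB
  have hstab : Fintype.card {g : Equiv.Perm Z // ψ0 ∘ g = ψ0} = B := by
    rw [DomMulAct.stabilizer_card, hB, ← Finset.prod_range_reflect, ← Fin.prod_univ_eq_prod_range (fun j => ((n + (k - 1 - j)) / k).factorial) k]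
    apply Finset.prod_congr rfl
    intro j _
    rw [hfib, div_shift k n j j.2]
  have hcount : n.factorial ≤ B * (Finset.univ.filter fun ψ : Z → Fin k => Equidistributed k ψ).card := by
    have : (Finset.univ : Finset (Equiv.Perm Z)).card = n.factorial := by
      rw [Finset.card_univ, Fintype.card_perm]
    rw [← this]
    apply Finset.card_le_mul_card_image_of_maps_to (f := fun g : Equiv.Perm Z => ψ0 ∘ g)
    · intro g _
      simpa using hE g
    · intro ψ _
      rcases (Finset.univ.filter fun g : Equiv.Perm Z => ψ0 ∘ g = ψ).eq_empty_or_nonempty with h | ⟨g0, hg0⟩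
      · rw [h]; simp
      · have hg0 := (Finset.mem_filter.1 hg0).2
        rw [← hstab, Fintype.card_subtype]
        apply Finset.card_le_card_of_injOn (fun g => g * g0⁻¹)
        · intro g hg
          have hg := (Finset.mem_filter.1 hg).2
          simp only [Finset.coe_filter, Finset.mem_univ, true_and, Set.mem_ofPred_eq]
          funext z
          have h1 := congrFun (hg.trans hg0.symm) (g0⁻¹ z)
          simpa using h1
        · intro a _ b _ h
          exact mul_right_cancel h
  have h3 := bal_prod_le k hk n
  rw [← Nat.factorial_mul_ascFactorial] at h3
  have h4 := Nat.ascFactorial_le_pow_add n k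
  have hBpos : 0 < B := Finset.prod_pos (fun j _ => Nat.factorial_pos _)
  apply Nat.le_of_mul_le_mul_right _ hBpos
  calc k ^ n * B ≤ n.factorial * (n+1).ascFactorial k := h3
    _ ≤ (B * (Finset.univ.filter fun ψ : Z → Fin k => Equidistributed k ψ).card) * (n + k)^k :=
      Nat.mul_le_mul hcount h4
    _ = _ := by ring

open Classical in
theorem chernoff_aux (k : ℕ) (hk : 1 ≤ k) (Z : Type) [Fintype Z] (i : Z → Fin k) (x t : ℝ)
    (hx0 : 0 < x) (hx1 : x ≤ 1) :
    ((Finset.univ.filter fun ψ : Z → Fin k =>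
      ((Finset.univ.filter fun z => ψ z = i z).card : ℝ) ≤ t * Fintype.card Z).card : ℝ)
      ≤ (((k:ℝ) - 1 + x) * x ^ (-t)) ^ Fintype.card Z := by
  set n := Fintype.card Z with hn
  have h1 : ∑ ψ : Z → Fin k, x ^ (Finset.univ.filter fun z => ψ z = i z).card = ((k:ℝ) - 1 + x) ^ n := by
    have h2 : ∀ z : Z, ∑ j : Fin k, (if j = i z then x else 1) = (k:ℝ) - 1 + x := by
      intro z
      have : ∀ j : Fin k, (if j = i z then x else 1) = 1 + if j = i z then x - 1 else 0 := by
        intro j; split_ifs <;> ring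
      simp only [this, Finset.sum_add_distrib, Finset.sum_ite_eq', Finset.mem_univ, if_true]
      simp; ring
    have h3 := Finset.prod_univ_sum (fun _ : Z => (Finset.univ : Finset (Fin k))) (fun z j => if j = i z then x else 1)
    simp only [h2, Finset.prod_const, Finset.card_univ] at h3
    rw [h3, Fintype.piFinset_univ]
    apply Finset.sum_congr rfl
    intro ψ _
    rw [Finset.prod_ite]
    simp
  set F := (Finset.univ.filter fun ψ : Z → Fin k =>
      ((Finset.univ.filter fun z => ψ z = i z).card : ℝ) ≤ t * n) with hF
  have h4 : (F.card : ℝ) * x ^ (t * n) ≤ ((k:ℝ) - 1 + x) ^ n := by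
    rw [← h1, ← nsmul_eq_mul, ← Finset.sum_const]
    calc _ ≤ ∑ ψ ∈ F, x ^ (Finset.univ.filter fun z => ψ z = i z).card := by
          apply Finset.sum_le_sum
          intro ψ hψ
          rw [← Real.rpow_natCast]
          exact Real.rpow_le_rpow_of_exponent_ge hx0 hx1 (Finset.mem_filter.1 hψ).2
      _ ≤ _ := Finset.sum_le_sum_of_subset_of_nonneg (Finset.subset_univ _) (fun _ _ _ => by positivity)
  rw [mul_pow, ← Real.rpow_natCast (x ^ (-t)), ← Real.rpow_mul hx0.le, neg_mul, Real.rpow_neg hx0.le,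
    ← div_eq_mul_inv, le_div_iff₀ (by positivity)]
  exact h4

open Classical in
theorem small_sets_aux (Z : Type) [Fintype Z] (R : Finset (Finset Z)) (y c : ℝ)
    (hy0 : 0 < y) (hy1 : y ≤ 1) (hR : ∀ J ∈ R, (J.card : ℝ) ≤ c * Fintype.card Z) :
    (R.card : ℝ) ≤ ((1 + y) * y ^ (-c)) ^ Fintype.card Z := by
  set n := Fintype.card Z with hn
  have h4 : (R.card : ℝ) * y ^ (c * n) ≤ (1 + y) ^ n := by
    have := Fintype.sum_pow_mul_eq_add_pow Z y 1
    rw [add_comm 1 y, hn, ← this, ← nsmul_eq_mul, ← Finset.sum_const]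
    calc _ ≤ ∑ J ∈ R, y ^ J.card * 1 ^ (Fintype.card Z - J.card) := by
          apply Finset.sum_le_sum
          intro J hJ
          rw [← Real.rpow_natCast, one_pow, mul_one]
          exact Real.rpow_le_rpow_of_exponent_ge hy0 hy1 (hR J hJ)
      _ ≤ _ := Finset.sum_le_sum_of_subset_of_nonneg (Finset.subset_univ _) (fun _ _ _ => by positivity)
  rw [mul_pow, ← Real.rpow_natCast (y ^ (-c)), ← Real.rpow_mul hy0.le, neg_mul, Real.rpow_neg hy0.le,
    ← div_eq_mul_inv, le_div_iff₀ (by positivity)]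
  exact h4

theorem exists_rho (k : ℕ) (hk : 2 ≤ k) (t : ℝ) (ht0 : 0 ≤ t) (ht : t * k < 1) :
    ∃ x : ℝ, 0 < x ∧ x ≤ 1 ∧ ((k:ℝ) - 1 + x) * x ^ (-t) < k := by
  have hk2 : (2:ℝ) ≤ k := by exact_mod_cast hk
  have htk : 0 ≤ t * k := by positivity
  have hx : 0 < (1 + t * k) / 2 := by linarith
  refine ⟨(1 + t * k) / 2, hx, by linarith, ?_⟩
  set x := (1 + t * k) / 2 with hxd
  have ht1 : t ≤ 1 := by nlinarith
  have h1 : x ^ (-t) ≤ 1 + t * (1 / x - 1) := by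
    have := rpow_one_add_le_one_add_mul_self (s := 1 / x - 1) (p := t)
      (by have : 0 < 1 / x := by positivity
          linarith) ht0 ht1
    rw [Real.rpow_neg hx.le, ← Real.inv_rpow hx.le]
    simpa using this
  have h2 : t * (1 / x - 1) ≤ (1 - x) / k := by
    have : t * (1 / x - 1) = (1 - x) * (t / x) := by field_simp
    rw [this, div_eq_mul_one_div (1 - x)]
    apply mul_le_mul_of_nonneg_left _ (by linarith)
    rw [div_le_div_iff₀ hx (by linarith)]
    linarith
  have hx1 : x < 1 := by linarith
  have h3 : ((k:ℝ) - 1 + x) * x ^ (-t) ≤ ((k:ℝ) - 1 + x) * (1 + (1 - x) / k) :=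
    mul_le_mul_of_nonneg_left (by linarith) (by linarith)
  refine h3.trans_lt ?_
  have : ((k:ℝ) - 1 + x) * (1 + (1 - x) / k) = k - (1 - x)^2 / k := by field_simp; ring
  rw [this]
  have : 0 < (1 - x)^2 / k := by
    apply div_pos (pow_pos (by linarith) _); linarith
  linarith

theorem exists_small (m : ℕ) (θ : ℝ) (hθ : 1 < θ) :
    ∃ y c : ℝ, 0 < y ∧ y ≤ 1 ∧ 0 < c ∧ ((1 + y) * y ^ (-c)) ^ m < θ := by
  have h1 : ∀ᶠ y : ℝ in nhdsWithin 0 (Set.Ioi 0), (1 + y) ^ m < θ := by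
    apply Filter.Eventually.filter_mono nhdsWithin_le_nhds
    have : ContinuousAt (fun y : ℝ => (1 + y) ^ m) 0 := by fun_prop
    exact this.eventually_lt_const (by simpa using hθ)
  have h2 : ∀ᶠ y : ℝ in nhdsWithin 0 (Set.Ioi 0), y ∈ Set.Ioc (0:ℝ) 1 := Ioc_mem_nhdsGT one_pos
  obtain ⟨y, hy, hy0, hy1⟩ := (h1.and h2).exists
  have h3 : ∀ᶠ c : ℝ in nhdsWithin 0 (Set.Ioi 0), ((1 + y) * y ^ (-c)) ^ m < θ := by
    apply Filter.Eventually.filter_mono nhdsWithin_le_nhds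
    have : ContinuousAt (fun c : ℝ => ((1 + y) * y ^ (-c)) ^ m) 0 := by
      apply ContinuousAt.pow
      apply ContinuousAt.mul continuousAt_const
      exact (Real.continuousAt_const_rpow hy0.ne').comp continuousAt_neg
    exact this.eventually_lt_const (by simpa using hy)
  obtain ⟨c, hc, hc0⟩ := (h3.and self_mem_nhdsWithin).exists
  exact ⟨y, c, hy0, hy1, hc0, hc⟩

theorem exists_N (k : ℕ) (r : ℝ) (hr0 : 0 < r) (hr : r < 1) :
    ∃ N : ℕ, ∀ n ≥ N, r ^ n * ((n:ℝ) + k) ^ k < 1 := by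
  have h := tendsto_pow_const_mul_const_pow_of_lt_one k hr0.le hr
  have h2 := (h.comp (Filter.tendsto_add_atTop_nat k)).eventually_lt_const (pow_pos hr0 k)
  obtain ⟨N, hN⟩ := Filter.eventually_atTop.1 h2
  refine ⟨N, fun n hn => ?_⟩
  have := hN n hn
  simp only [Function.comp] at this
  rw [pow_add, ← mul_assoc] at this
  push_cast at this
  have h3 := (mul_lt_iff_lt_one_left (pow_pos hr0 k)).1 this
  linarith

theorem half_to_indep (k : ℕ) (hk : 1 ≤ k) (τ : ℝ)
    (hτ₁ : ((k : ℝ) - 1) / k < τ) (hτ₂ : τ ≤ 1) :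
    ∃ c N : ℝ, 0 < c ∧ 0 < N ∧
      ∀ (Z : Type) [Fintype Z], N ≤ (Fintype.card Z : ℝ) →
        ∀ Zψ : (Z → Fin k) → Finset Z,
          (∀ ψ, Equidistributed k ψ → τ * (Fintype.card Z : ℝ) ≤ (Zψ ψ).card) →
          ∃ J : Finset Z, c * (Fintype.card Z : ℝ) ≤ J.card ∧
            ∀ σ : Z → Fin k, ∃ ψ : Z → Fin k, Equidistributed k ψ ∧
              (∀ z ∈ J, ψ z = σ z) ∧ J ⊆ Zψ ψ := by
  classical
  rcases Nat.lt_or_ge k 2 with hk1 | hk2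
  · obtain rfl : k = 1 := by omega
    refine ⟨τ, 1, by simpa using hτ₁, one_pos, ?_⟩
    intro Z _ _ Zψ hZ
    have hE : Equidistributed 1 (fun _ : Z => (0 : Fin 1)) := by
      intro j
      have : (Finset.univ.filter fun z : Z => (0 : Fin 1) = j) = Finset.univ := by
        ext z; simp [Subsingleton.elim (0 : Fin 1) j]
      rw [this]
      simp
    refine ⟨_, hZ _ hE, fun σ => ⟨_, hE, fun z _ => Subsingleton.elim _ _, subset_rfl⟩⟩
  have hkR : (2:ℝ) ≤ k := by exact_mod_cast hk2
  have hk0 : (0:ℝ) < k := by linarith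
  have ht : (1 - τ) * k < 1 := by
    rw [div_lt_iff₀ hk0] at hτ₁
    linarith
  obtain ⟨x, hx0, hx1, hx⟩ := exists_rho k hk2 (1 - τ) (by linarith) ht
  set κ := ((k:ℝ) - 1 + x) * x ^ (-(1 - τ)) with hκ
  have hκ0 : 0 < κ := mul_pos (by linarith) (Real.rpow_pos_of_pos hx0 _)
  have hq0 : 0 < ((k:ℝ) - 1) / k := div_pos (by linarith) hk0
  have hq1 : ((k:ℝ) - 1) / k < 1 := by rw [div_lt_one hk0]; linarith
  obtain ⟨m, hm⟩ := exists_pow_lt_of_lt_one (show 0 < 1 - κ / k by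
    have : κ / k < 1 := by rw [div_lt_one hk0]; exact hx
    linarith) hq1
  set β := (((k:ℝ) - 1) / k) ^ m with hβ
  have hβ0 : 0 < β := pow_pos hq0 m
  have hκk : 0 < κ / k := div_pos hκ0 hk0
  have hθ : 1 < (1 - β) * k / κ := by
    rw [one_lt_div hκ0]
    have : κ / k < 1 - β := by linarith
    rwa [div_lt_iff₀ hk0] at this
  set θ := (1 - β) * k / κ with hθd
  obtain ⟨y, c, hy0, hy1, hc0, hv⟩ := exists_small m θ hθ
  set v := ((1 + y) * y ^ (-c)) ^ m with hvd
  have hv0 : 0 < v := by positivity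
  have hθ0 : 0 < θ := by linarith
  obtain ⟨N, hN⟩ := exists_N k (v / θ) (div_pos hv0 hθ0) ((div_lt_one hθ0).2 hv)
  refine ⟨c, N + 1, hc0, by positivity, ?_⟩
  intro Z _ hZN Zψ hZ
  set n := Fintype.card Z with hn
  have hNn : N ≤ n := by
    have : (N:ℝ) ≤ n := by linarith
    exact_mod_cast this
  let f : (Z → Fin k) → Z → Option (Fin k) := fun ψ z => if z ∈ Zψ ψ then some (ψ z) else none
  set S := Finset.univ.filter fun ψ : Z → Fin k => Equidistributed k ψ with hS
  have hcore := core_aux k hk2 f m β hβ0.le (by linarith) (by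
    rw [hβ, ← mul_pow, div_mul_div_cancel₀ hk0.ne', div_self (by linarith), one_pow]) (κ ^ n)
    Finset.univ S (by
      intro i
      refine le_trans ?_ (chernoff_aux k hk Z i x (1 - τ) hx0 hx1)
      norm_cast
      apply Finset.card_le_card
      intro ψ hψ
      simp only [hS, Finset.mem_filter, Finset.mem_univ, true_and, true_imp_iff] at hψ ⊢
      obtain ⟨hψ, hψ'⟩ := hψ
      have h1 := hZ ψ hψ
      have h2 : (Finset.univ.filter fun z => ψ z = i z) ⊆ (Zψ ψ)ᶜ := by
        intro z hz
        rw [Finset.mem_compl]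
        intro hz'
        apply hψ' z
        simp only [f, if_pos hz']
        rw [(Finset.mem_filter.1 hz).2]
      have h3 := Finset.card_le_card h2
      have h4 := (Zψ ψ).card_add_card_compl
      have h5 : (((Finset.univ.filter fun z => ψ z = i z).card + (Zψ ψ).card : ℕ) : ℝ) ≤ n := by
        exact_mod_cast (by omega)
      push_cast at h5
      linarith)
  set R := (Finset.univ : Finset Z).powerset.filter fun J => ∀ σ : Z → Fin k, ∃ ψ ∈ S, ∀ z ∈ J, f ψ z = some (σ z) with hR
  by_cases hJ : ∃ J ∈ R, c * (n:ℝ) ≤ J.card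
  · obtain ⟨J, hJR, hJc⟩ := hJ
    refine ⟨J, hJc, fun σ => ?_⟩
    obtain ⟨ψ, hψ, h⟩ := (Finset.mem_filter.1 hJR).2 σ
    have h' : ∀ z ∈ J, z ∈ Zψ ψ ∧ ψ z = σ z := by
      intro z hz
      have := h z hz
      by_cases g : z ∈ Zψ ψ <;> simp_all [f]
    exact ⟨ψ, (Finset.mem_filter.1 hψ).2, fun z hz => (h' z hz).2, fun z hz => (h' z hz).1⟩
  · exfalso
    push Not at hJ
    have h1 := small_sets_aux Z R y c hy0 hy1 (fun J hJ' => (hJ J hJ').le)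
    have h2 : (R.card : ℝ) ^ m ≤ v ^ n := by
      rw [hvd, ← pow_mul, mul_comm m, pow_mul]
      exact pow_le_pow_left₀ (by positivity) h1 m
    have h3 : (k:ℝ) ^ n ≤ S.card * ((n:ℝ) + k) ^ k := by exact_mod_cast equi_count k hk Z
    rw [Finset.card_univ, ← hn] at hcore
    replace hcore : (1 - β) ^ n * S.card ≤ κ ^ n * (R.card:ℝ) ^ m := by
      convert hcore
    have h4 : ((1 - β) * k) ^ n ≤ κ ^ n * v ^ n * ((n:ℝ) + k) ^ k := by
      rw [mul_pow]
      have hb : 0 ≤ (1 - β) ^ n := pow_nonneg (by linarith) _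
      calc (1 - β) ^ n * (k:ℝ) ^ n ≤ (1 - β) ^ n * (S.card * ((n:ℝ) + k) ^ k) := by gcongr
        _ = ((1 - β) ^ n * S.card) * ((n:ℝ) + k) ^ k := by ring
        _ ≤ (κ ^ n * (R.card:ℝ) ^ m) * ((n:ℝ) + k) ^ k := by
          apply mul_le_mul_of_nonneg_right hcore (by positivity)
        _ ≤ _ := by gcongr
    have h5 := hN n hNn
    have h6 : (1 - β) * k = θ * κ := by rw [hθd]; field_simp
    rw [h6, mul_pow] at h4
    rw [div_pow, div_mul_eq_mul_div, div_lt_one (by positivity)] at h5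
    have hκn : 0 < κ ^ n := by positivity
    nlinarith
end

section
/- Let 0 < δ ≤ 1 and 1 < p ≤ ∞. There exist a finite set T ⊆ ℝ² and c' > 0, depending only on δ and p, such that: (1) t₁ ≥ t₂ + δ for every (t₁,t₂) ∈ T; and (2) for any n ∈ ℕ, if E is a subset of the closed unit ball of ℓ_p^n whose convex hull together with 0 contains the closed δ-ball of ℓ_p^n, then there are J ⊆ {1,...,n} with |J| ≥ c'n and (t₁,t₂) ∈ T such that for every map σ : J → {1,2} there is v ∈ E with v(j) ≥ t₁ n^{−1/p} for all j ∈ σ⁻¹(1) and v(j) ≤ t₂ n^{−1/p} for all j ∈ σ⁻¹(2). -/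
open scoped ENNReal

namespace FLM

noncomputable def sg (b : Bool) : ℝ := if b then 1 else -1

lemma abs_sg (b : Bool) : |sg b| = 1 := by cases b <;> simp [sg]
lemma sg_mul_sg (b : Bool) : sg b * sg b = 1 := by cases b <;> simp [sg]

lemma hoeffding {n : ℕ} (A : Finset (Fin n → Bool)) (c : Fin n → ℝ) (C a : ℝ) (hC : 0 < C)
    (ha : 0 < a) (hc : ∀ i, |c i| ≤ C)
    (h : a * n * A.card ≤ ∑ ε ∈ A, ∑ i, c i * sg (ε i)) :
    (A.card : ℝ) ≤ 2 ^ n * Real.exp (-(a ^ 2 / (2 * C ^ 2) * n)) := by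
  set l : ℝ := a / C ^ 2 with hl
  have hl0 : 0 < l := by positivity
  have h1 : Real.exp (l * (a * n)) * A.card ≤ ∑ ε ∈ A, Real.exp (∑ i, l * (c i * sg (ε i))) := by
    have : ∀ ε ∈ A, Real.exp (l * (a * n)) * (1 + (∑ i, l * (c i * sg (ε i)) - l * (a * n)))
        ≤ Real.exp (∑ i, l * (c i * sg (ε i))) := by
      intro ε _
      have := Real.add_one_le_exp (∑ i, l * (c i * sg (ε i)) - l * (a * n))
      calc _ ≤ Real.exp (l * (a * n)) * Real.exp (∑ i, l * (c i * sg (ε i)) - l * (a * n)) := by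
            gcongr; linarith
        _ = _ := by rw [← Real.exp_add]; congr 1; ring
    refine le_trans ?_ (Finset.sum_le_sum this)
    rw [← Finset.mul_sum]
    gcongr
    simp only [Finset.sum_add_distrib, Finset.sum_sub_distrib, Finset.sum_const, nsmul_eq_mul,
      mul_one, ← Finset.mul_sum]
    nlinarith
  have h2 : ∑ ε ∈ A, Real.exp (∑ i, l * (c i * sg (ε i))) ≤
      ∑ ε : Fin n → Bool, Real.exp (∑ i, l * (c i * sg (ε i))) :=
    Finset.sum_le_sum_of_subset_of_nonneg (Finset.subset_univ _) (fun _ _ _ => (Real.exp_pos _).le)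
  have h3 : ∑ ε : Fin n → Bool, Real.exp (∑ i, l * (c i * sg (ε i))) =
      ∏ i, ∑ b : Bool, Real.exp (l * (c i * sg b)) := by
    rw [Finset.prod_univ_sum, Fintype.piFinset_univ]
    simp only [Real.exp_sum]
  have h4 : ∏ i, ∑ b : Bool, Real.exp (l * (c i * sg b)) ≤
      ∏ i : Fin n, (2 * Real.exp (l ^ 2 * C ^ 2 / 2)) := by
    refine Finset.prod_le_prod (fun i _ => by positivity) (fun i _ => ?_)
    have e : ∑ b : Bool, Real.exp (l * (c i * sg b)) = 2 * Real.cosh (l * c i) := by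
      simp [sg, Real.cosh_eq]; ring
    rw [e]
    have := Real.cosh_le_exp_half_sq (l * c i)
    have h5 : (l * c i) ^ 2 ≤ l ^ 2 * C ^ 2 := by
      rw [mul_pow]
      have := sq_le_sq' (neg_le_of_abs_le (hc i)) (le_of_abs_le (hc i))
      gcongr
    have : Real.exp ((l * c i) ^ 2 / 2) ≤ Real.exp (l ^ 2 * C ^ 2 / 2) := by gcongr
    linarith
  have h6 : Real.exp (l * (a * n)) * A.card ≤ 2 ^ n * Real.exp (n * (l ^ 2 * C ^ 2 / 2)) := by
    have : ∏ i : Fin n, (2 * Real.exp (l ^ 2 * C ^ 2 / 2)) =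
        2 ^ n * Real.exp (n * (l ^ 2 * C ^ 2 / 2)) := by
      rw [Finset.prod_const, mul_pow, ← Real.exp_nat_mul]; simp
    linarith
  have h7 : (A.card : ℝ) = Real.exp (-(l * (a * n))) * (Real.exp (l * (a * n)) * A.card) := by
    rw [← mul_assoc, ← Real.exp_add]; simp
  rw [h7]
  refine (mul_le_mul_of_nonneg_left h6 (Real.exp_pos _).le).trans (le_of_eq ?_)
  rw [mul_left_comm, ← Real.exp_add]
  congr 2
  rw [hl]; field_simp; ring

lemma coord {α : Type*} (A : Finset α) (f : α → ℝ) (δ M θ : ℝ) (hδ : 0 < δ)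
    (hδ1 : δ ≤ 1) (hM : 1 ≤ M) (hf : ∀ x, |f x| ≤ M) (hθ : 0 < θ) (K : ℕ)
    (hK1 : ∀ k < K, -M + k * (δ / 4) < M) (hK2 : M - δ / 4 ≤ -M + ((K - 1 : ℕ) : ℝ) * (δ / 4))
    (hK0 : 0 < K) :
    (∃ k < K, θ * A.card ≤ (A.filter (fun x => -M + k * (δ / 4) + δ ≤ f x)).card ∧
      θ * A.card ≤ (A.filter (fun x => f x ≤ -M + k * (δ / 4))).card) ∨
    ∃ c : ℝ, |c| ≤ 2 * M ∧
      ((A.filter (fun x => 5 * δ / 8 < |f x - c|)).card : ℝ) ≤ 2 * θ * A.card := by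
  classical
  by_cases h : ∃ k < K, θ * A.card ≤ (A.filter (fun x => f x ≤ -M + k * (δ / 4))).card
  · obtain ⟨hk, hk2⟩ := Nat.find_spec h
    have hmin : ∀ m < Nat.find h, ¬ _ := fun m hm => Nat.find_min h hm
    set k := Nat.find h
    by_cases h1 : θ * A.card ≤ (A.filter (fun x => -M + k * (δ / 4) + δ ≤ f x)).card
    · exact Or.inl ⟨k, hk, h1, hk2⟩
    right
    push Not at h1
    have hkM := hK1 k hk
    refine ⟨-M + k * (δ / 4) + 3 * δ / 8, ?_, ?_⟩
    · rw [abs_le]; constructor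
      · have : (0:ℝ) ≤ k * (δ / 4) := by positivity
        linarith
      · linarith
    · have hsub : A.filter (fun x => 5 * δ / 8 < |f x - (-M + k * (δ / 4) + 3 * δ / 8)|) ⊆
          A.filter (fun x => -M + k * (δ / 4) + δ ≤ f x) ∪
          A.filter (fun x => f x < -M + k * (δ / 4) - δ / 4) := by
        intro x hx
        simp only [Finset.mem_filter, Finset.mem_union] at hx ⊢
        rcases lt_abs.1 hx.2 with h2 | h2
        · left; exact ⟨hx.1, by linarith⟩
        · right; exact ⟨hx.1, by linarith⟩
      have h2 : ((A.filter (fun x => f x < -M + k * (δ / 4) - δ / 4)).card : ℝ) ≤ θ * A.card := by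
        rcases Nat.eq_zero_or_pos k with h0 | h0
        · rw [Finset.filter_false_of_mem]
          · simp; positivity
          · intro x _
            have := (abs_le.1 (hf x)).1
            rw [h0]; push_cast; linarith
        · have := hmin (k - 1) (by omega)
          push Not at this
          have := this (by omega)
          refine le_trans ?_ this.le
          rw [Nat.cast_sub (by omega)]
          norm_cast
          apply Finset.card_le_card
          intro x hx
          simp only [Finset.mem_filter] at hx ⊢
          refine ⟨hx.1, ?_⟩
          push_cast
          linarith [hx.2]
      have h3 := (Finset.card_le_card hsub).trans (Finset.card_union_le _ _)
      have h3' : ((A.filter (fun x => 5 * δ / 8 < |f x - (-M + k * (δ / 4) + 3 * δ / 8)|)).card : ℝ)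
        ≤ (A.filter (fun x => -M + k * (δ / 4) + δ ≤ f x)).card +
          (A.filter (fun x => f x < -M + k * (δ / 4) - δ / 4)).card := by exact_mod_cast h3
      linarith
  · right
    push Not at h
    refine ⟨M, by rw [abs_of_pos] <;> linarith, ?_⟩
    have := h (K - 1) (by omega)
    have h2 : ((A.filter (fun x => 5 * δ / 8 < |f x - M|)).card : ℝ) ≤
        (A.filter (fun x => f x ≤ -M + ((K - 1 : ℕ) : ℝ) * (δ / 4))).card := by
      norm_cast
      apply Finset.card_le_card
      intro x hx
      simp only [Finset.mem_filter] at hx ⊢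
      refine ⟨hx.1, ?_⟩
      have h4 := (abs_le.1 (hf x)).2
      rcases lt_abs.1 hx.2 with h2 | h2 <;> linarith
    have : 0 ≤ θ * A.card := by positivity
    linarith

lemma split {n : ℕ} (A : Finset (Fin n → Bool)) (W : (Fin n → Bool) → Fin n → ℝ)
    (δ M : ℝ) (hδ : 0 < δ)
    (hδ1 : δ ≤ 1) (hM : 1 ≤ M) (hW : ∀ ε i, |W ε i| ≤ M)
    (hS : ∀ ε, 7 / 8 * δ * n ≤ ∑ i, sg (ε i) * W ε i) (K : ℕ)
    (hK1 : ∀ k < K, -M + k * (δ / 4) < M) (hK2 : M - δ / 4 ≤ -M + ((K - 1 : ℕ) : ℝ) * (δ / 4))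
    (hK0 : 0 < K)
    (hA : 2 ^ n * Real.exp (-((δ / 8) ^ 2 / (2 * (2 * M) ^ 2) * n)) < A.card) :
    ∃ i, ∃ k < K,
      δ / (48 * M) * A.card ≤ (A.filter (fun x => -M + k * (δ / 4) + δ ≤ W x i)).card ∧
      δ / (48 * M) * A.card ≤ (A.filter (fun x => W x i ≤ -M + k * (δ / 4))).card := by
  by_contra hcon
  have hθ : 0 < δ / (48 * M) := by positivity
  have : ∀ i, ∃ c : ℝ, |c| ≤ 2 * M ∧
      ((A.filter (fun x => 5 * δ / 8 < |W x i - c|)).card : ℝ) ≤ 2 * (δ / (48 * M)) * A.card := by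
    intro i
    rcases coord A (fun x => W x i) δ M _ hδ hδ1 hM (fun x => hW x i) hθ K hK1 hK2 hK0 with h | h
    · exact absurd ⟨i, h⟩ hcon
    · exact h
  choose c hc hc2 using this
  refine absurd hA (not_lt.2 (hoeffding A c (2 * M) (δ / 8) (by positivity) (by positivity) hc ?_))
  have e1 : ∀ i, ∑ ε ∈ A, |W ε i - c i| ≤ 3 / 4 * δ * A.card := by
    intro i
    have : ∀ ε ∈ A, |W ε i - c i| ≤ 5 * δ / 8 + 3 * M * (if 5 * δ / 8 < |W ε i - c i| then 1 else 0) := by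
      intro ε _
      split_ifs with h
      · have := abs_sub (W ε i) (c i)
        have := hW ε i
        have := hc i
        linarith
      · push Not at h; linarith
    refine (Finset.sum_le_sum this).trans ?_
    rw [Finset.sum_add_distrib, ← Finset.mul_sum, Finset.sum_boole, Finset.sum_const, nsmul_eq_mul]
    have h2 := mul_le_mul_of_nonneg_left (hc2 i) (show 0 ≤ 3 * M by positivity)
    have h3 : 3 * M * (2 * (δ / (48 * M)) * A.card) = δ / 8 * A.card := by field_simp; ring
    linarith
  have e2 : ∀ ε ∈ A, ∀ i, sg (ε i) * W ε i - |W ε i - c i| ≤ c i * sg (ε i) := by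
    intro ε _ i
    have : sg (ε i) * (W ε i - c i) ≤ |W ε i - c i| := by
      refine (le_abs_self _).trans ?_
      rw [abs_mul, abs_sg, one_mul]
    linarith
  have e3 : ∑ ε ∈ A, ∑ i, (sg (ε i) * W ε i - |W ε i - c i|) ≤ ∑ ε ∈ A, ∑ i, c i * sg (ε i) :=
    Finset.sum_le_sum fun ε hε => Finset.sum_le_sum fun i _ => e2 ε hε i
  refine le_trans ?_ e3
  simp only [Finset.sum_sub_distrib]
  have e4 : ∑ ε ∈ A, ∑ i, |W ε i - c i| ≤ n * (3 / 4 * δ * A.card) := by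
    rw [Finset.sum_comm]
    refine (Finset.sum_le_sum fun i _ => e1 i).trans ?_
    simp
  have e5 : A.card * (7 / 8 * δ * n) ≤ ∑ ε ∈ A, ∑ i, sg (ε i) * W ε i := by
    refine le_trans ?_ (Finset.sum_le_sum fun ε _ => hS ε)
    simp
  linarith

/-- `u` is shattered by `A`. -/
def Sh {n K : ℕ} (t : Fin K → ℝ) (δ : ℝ) (W : (Fin n → Bool) → Fin n → ℝ)
    (A : Finset (Fin n → Bool)) (u : Fin n → Option (Fin K)) : Prop :=
  ∀ σ : Fin n → Bool, ∃ ε ∈ A, ∀ j k, u j = some k →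
    (σ j = true → t k + δ ≤ W ε j) ∧ (σ j = false → W ε j ≤ t k)

open Classical in
noncomputable def S {n K : ℕ} (t : Fin K → ℝ) (δ : ℝ) (W : (Fin n → Bool) → Fin n → ℝ)
    (A : Finset (Fin n → Bool)) : Finset (Fin n → Option (Fin K)) :=
  Finset.univ.filter (Sh t δ W A)

lemma Sh.mono {n K : ℕ} {t : Fin K → ℝ} {δ : ℝ} {W : (Fin n → Bool) → Fin n → ℝ}
    {A B : Finset (Fin n → Bool)} {u : Fin n → Option (Fin K)} (h : Sh t δ W A u) (hAB : A ⊆ B) :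
    Sh t δ W B u := fun σ => by
  obtain ⟨ε, h1, h2⟩ := h σ
  exact ⟨ε, hAB h1, h2⟩

lemma S_one {n K : ℕ} (t : Fin K → ℝ) (δ : ℝ) (W : (Fin n → Bool) → Fin n → ℝ)
    (A : Finset (Fin n → Bool)) (hA : A.Nonempty) : 1 ≤ (S t δ W A).card := by
  classical
  rw [Nat.one_le_iff_ne_zero, ← Nat.pos_iff_ne_zero, Finset.card_pos]
  refine ⟨fun _ => none, ?_⟩
  obtain ⟨ε, hε⟩ := hA
  simp only [S, Finset.mem_filter, Finset.mem_univ, true_and]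
  exact fun σ => ⟨ε, hε, by simp⟩

lemma S_add {n K : ℕ} (t : Fin K → ℝ) (δ : ℝ) (hδ : 0 < δ) (W : (Fin n → Bool) → Fin n → ℝ)
    (A : Finset (Fin n → Bool)) (i : Fin n) (k : Fin K) :
    (S t δ W (A.filter (fun x => t k + δ ≤ W x i))).card +
    (S t δ W (A.filter (fun x => W x i ≤ t k))).card ≤ (S t δ W A).card := by
  classical
  set P := A.filter (fun x => t k + δ ≤ W x i) with hP
  set Q := A.filter (fun x => W x i ≤ t k) with hQ
  have hPA : P ⊆ A := Finset.filter_subset _ _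
  have hQA : Q ⊆ A := Finset.filter_subset _ _
  have hnone : ∀ u, Sh t δ W P u → Sh t δ W Q u → u i = none := by
    intro u h1 h2
    rcases hu : u i with _ | m
    · rfl
    exfalso
    obtain ⟨ε, hε, h⟩ := h1 (fun _ => false)
    obtain ⟨ε', hε', h'⟩ := h2 (fun _ => true)
    have a1 := (h i m hu).2 rfl
    have a2 := (h' i m hu).1 rfl
    have a3 := (Finset.mem_filter.1 hε).2
    have a4 := (Finset.mem_filter.1 hε').2
    linarith
  rw [← Finset.card_union_add_card_inter]
  have himg : ((S t δ W P ∩ S t δ W Q).image (fun u => Function.update u i (some k))).card =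
      (S t δ W P ∩ S t δ W Q).card := by
    apply Finset.card_image_of_injOn
    intro u hu v hv huv
    simp only [S, Finset.coe_inter, Finset.coe_filter, Set.mem_inter_iff, Set.mem_ofPred_eq,
      Finset.mem_univ, true_and] at hu hv
    funext j
    by_cases hj : j = i
    · rw [hj, hnone u hu.1 hu.2, hnone v hv.1 hv.2]
    · have := congrFun huv j
      simpa [hj] using this
  rw [← himg, ← Finset.card_union_of_disjoint]
  · apply Finset.card_le_card
    intro u hu
    simp only [S, Finset.mem_union, Finset.mem_image, Finset.mem_inter, Finset.mem_filter,
      Finset.mem_univ, true_and] at hu ⊢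
    rcases hu with (h | h) | ⟨v, ⟨h1, h2⟩, rfl⟩
    · exact h.mono hPA
    · exact h.mono hQA
    · intro σ
      rcases hσ : σ i with _ | _
      · obtain ⟨ε, hε, h⟩ := h2 σ
        refine ⟨ε, hQA hε, fun j m hj => ?_⟩
        by_cases hji : j = i
        · subst hji
          simp at hj
          subst hj
          simpa [hσ] using (Finset.mem_filter.1 hε).2
        · exact h j m (by simpa [hji] using hj)
      · obtain ⟨ε, hε, h⟩ := h1 σ
        refine ⟨ε, hPA hε, fun j m hj => ?_⟩
        by_cases hji : j = i
        · subst hji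
          simp at hj
          subst hj
          simpa [hσ] using (Finset.mem_filter.1 hε).2
        · exact h j m (by simpa [hji] using hj)
  · rw [Finset.disjoint_left]
    intro u hu hu'
    simp only [S, Finset.mem_union, Finset.mem_image, Finset.mem_inter, Finset.mem_filter,
      Finset.mem_univ, true_and] at hu hu'
    obtain ⟨v, _, rfl⟩ := hu'
    rcases hu with h | h
    · obtain ⟨ε, hε, h⟩ := h (fun _ => false)
      have a1 := (h i k (by simp)).2 rfl
      have a3 := (Finset.mem_filter.1 hε).2
      linarith
    · obtain ⟨ε, hε, h⟩ := h (fun _ => true)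
      have a1 := (h i k (by simp)).1 rfl
      have a3 := (Finset.mem_filter.1 hε).2
      linarith

lemma S_pow {n K : ℕ} (W : (Fin n → Bool) → Fin n → ℝ)
    (δ M : ℝ) (hδ : 0 < δ)
    (hδ1 : δ ≤ 1) (hM : 1 ≤ M) (hW : ∀ ε i, |W ε i| ≤ M)
    (hS : ∀ ε, 7 / 8 * δ * n ≤ ∑ i, sg (ε i) * W ε i)
    (hK1 : ∀ k < K, -M + k * (δ / 4) < M) (hK2 : M - δ / 4 ≤ -M + ((K - 1 : ℕ) : ℝ) * (δ / 4))
    (hK0 : 0 < K) (m : ℕ) : ∀ A : Finset (Fin n → Bool),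
    (2 ^ n * Real.exp (-((δ / 8) ^ 2 / (2 * (2 * M) ^ 2) * n)) < (δ / (48 * M)) ^ m * A.card) →
    2 ^ (m + 1) ≤ (S (fun k : Fin K => -M + k * (δ / 4)) δ W A).card := by
  have hθ : 0 < δ / (48 * M) := by positivity
  have hθ1 : δ / (48 * M) ≤ 1 := by rw [div_le_one (by positivity)]; linarith
  induction m with
  | zero =>
    intro A hA
    rw [pow_zero, one_mul] at hA
    obtain ⟨i, k, hk, h1, h2⟩ := split A W δ M hδ hδ1 hM hW hS K hK1 hK2 hK0 hA
    have h0 : 0 < (A.card : ℝ) := lt_trans (by positivity) hA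
    have h00 := mul_pos hθ h0
    have a1 := S_one (fun k : Fin K => -M + k * (δ / 4)) δ W _
      (Finset.card_pos.1 (by exact_mod_cast h00.trans_le h1))
    have a2 := S_one (fun k : Fin K => -M + k * (δ / 4)) δ W _
      (Finset.card_pos.1 (by exact_mod_cast h00.trans_le h2))
    have := S_add (fun k : Fin K => -M + k * (δ / 4)) δ hδ W A i ⟨k, hk⟩
    simp only at this
    omega
  | succ m ih =>
    intro A hA
    have hA' : 2 ^ n * Real.exp (-((δ / 8) ^ 2 / (2 * (2 * M) ^ 2) * n)) < A.card :=
      hA.trans_le (mul_le_of_le_one_left (by positivity) (pow_le_one₀ hθ.le hθ1))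
    obtain ⟨i, k, hk, h1, h2⟩ := split A W δ M hδ hδ1 hM hW hS K hK1 hK2 hK0 hA'
    rw [pow_succ (δ / (48 * M)), mul_assoc] at hA
    have a1 := ih _ (hA.trans_le (mul_le_mul_of_nonneg_left h1 (by positivity)))
    have a2 := ih _ (hA.trans_le (mul_le_mul_of_nonneg_left h2 (by positivity)))
    have := S_add (fun k : Fin K => -M + k * (δ / 4)) δ hδ W A i ⟨k, hk⟩
    simp only at this
    rw [pow_succ]
    omega

lemma count {n K : ℕ} (F : Finset (Fin n → Option (Fin K))) (x d : ℝ) (hx : 0 < x) (hx1 : x ≤ 1)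
    (h : ∀ u ∈ F, ((Finset.univ.filter (fun j => (u j).isSome)).card : ℝ) ≤ d) :
    (F.card : ℝ) * x ^ d ≤ Real.exp (K * x * n) := by
  have h1 : (F.card : ℝ) * x ^ d ≤ ∑ u ∈ F, ∏ j, (if (u j).isSome then x else 1) := by
    rw [← nsmul_eq_mul]
    refine Finset.card_nsmul_le_sum _ _ _ fun u hu => ?_
    rw [Finset.prod_ite]
    simp only [Finset.prod_const, one_pow, mul_one]
    rw [← Real.rpow_natCast]
    exact Real.rpow_le_rpow_of_exponent_ge hx hx1 (h u hu)
  have h2 : ∑ u ∈ F, ∏ j, (if (u j).isSome then x else 1) ≤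
      ∑ u : Fin n → Option (Fin K), ∏ j, (if (u j).isSome then x else 1) :=
    Finset.sum_le_sum_of_subset_of_nonneg (Finset.subset_univ _)
      fun u _ _ => Finset.prod_nonneg fun j _ => by split_ifs <;> positivity
  have h3 : ∑ u : Fin n → Option (Fin K), ∏ j, (if (u j).isSome then x else 1) =
      (1 + K * x) ^ n := by
    have := Finset.prod_univ_sum (fun _ : Fin n => (Finset.univ : Finset (Option (Fin K))))
      (fun _ o => if o.isSome then x else 1)
    simp only [Fintype.piFinset_univ] at this
    rw [← this]
    simp
  have h4 : (1 + K * x) ^ n ≤ Real.exp (K * x * n) := by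
    rw [mul_comm (K * x) (n : ℝ), Real.exp_nat_mul]
    gcongr
    linarith [Real.add_one_le_exp (K * x)]
  linarith

lemma core (δ M : ℝ) (hδ : 0 < δ) (hδ1 : δ ≤ 1) (hM : 1 ≤ M) :
    ∃ (T : Finset (ℝ × ℝ)) (c' : ℝ), 0 < c' ∧
      (∀ t ∈ T, t.1 = t.2 + δ ∧ -M ≤ t.2 ∧ t.2 < M) ∧
      ∀ n : ℕ, 1 ≤ n → ∀ W : (Fin n → Bool) → Fin n → ℝ, (∀ ε i, |W ε i| ≤ M) →
        (∀ ε, 7 / 8 * δ * n ≤ ∑ i, sg (ε i) * W ε i) →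
        ∃ J : Finset (Fin n), ∃ t ∈ T, c' * (n : ℝ) ≤ J.card ∧
          ∀ σ : Fin n → Bool, ∃ ε, ∀ j ∈ J,
            (σ j = true → t.1 ≤ W ε j) ∧ (σ j = false → W ε j ≤ t.2) := by
  classical
  set K := ⌈2 * M / (δ / 4)⌉₊ with hK
  have hK0 : 0 < K := Nat.ceil_pos.2 (by positivity)
  have hK1 : ∀ k < K, -M + k * (δ / 4) < M := by
    intro k hk
    have := Nat.lt_ceil.1 hk
    rw [lt_div_iff₀ (by positivity)] at this
    linarith
  have hK2 : M - δ / 4 ≤ -M + ((K - 1 : ℕ) : ℝ) * (δ / 4) := by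
    have := Nat.le_ceil (2 * M / (δ / 4))
    rw [← hK, div_le_iff₀ (by positivity)] at this
    rw [Nat.cast_sub (by omega)]
    push_cast
    linarith
  clear_value K
  have hKr : (0:ℝ) < K := by exact_mod_cast hK0
  set θ := δ / (48 * M) with hθd
  have hθ : 0 < θ := by positivity
  have hθ1 : θ < 1 := by rw [hθd, div_lt_one (by positivity)]; linarith
  set γ := (δ / 8) ^ 2 / (2 * (2 * M) ^ 2) with hγd
  have hγ : 0 < γ := by positivity
  have hlog : Real.log θ < 0 := Real.log_neg hθ hθ1
  set β := γ / (2 * -Real.log θ) with hβd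
  have hβ : 0 < β := div_pos hγ (by linarith)
  set b := β * Real.log 2 with hbd
  have hb : 0 < b := mul_pos hβ (Real.log_pos (by norm_num))
  set x := b / (4 * K + b) with hxd
  have hx : 0 < x := by positivity
  have hx1 : x < 1 := by rw [hxd, div_lt_one (by positivity)]; linarith
  have hxK : K * x ≤ b / 4 := by
    rw [hxd, mul_div_assoc', div_le_div_iff₀ (by positivity) (by norm_num)]
    nlinarith
  have hlx : Real.log x < 0 := Real.log_neg hx hx1
  set c := b / (4 * -Real.log x) with hcd
  have hc : 0 < c := div_pos hb (by linarith)
  refine ⟨Finset.univ.image (fun k : Fin K => (-M + k * (δ / 4) + δ, -M + k * (δ / 4))),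
    c / K, by positivity, ?_, ?_⟩
  · intro t ht
    obtain ⟨k, _, rfl⟩ := Finset.mem_image.1 ht
    refine ⟨rfl, ?_, hK1 k k.2⟩
    have : (0:ℝ) ≤ (k : ℝ) * (δ / 4) := by positivity
    simp only
    linarith
  intro n hn W hW hS
  have hn0 : (0:ℝ) < n := by exact_mod_cast hn
  have hpow := S_pow (K := K) W δ M hδ hδ1 hM hW hS hK1 hK2 hK0 ⌊β * n⌋₊ Finset.univ (by
    rw [← hθd, ← hγd]
    have h1 : Real.exp (-(γ * n)) < θ ^ ⌊β * n⌋₊ := by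
      rw [← Real.rpow_natCast, Real.rpow_def_of_pos hθ]
      rw [Real.exp_lt_exp]
      have h2 := Nat.floor_le (show 0 ≤ β * n by positivity)
      have h3 : Real.log θ * (β * n) ≤ Real.log θ * (⌊β * n⌋₊ : ℝ) :=
        mul_le_mul_of_nonpos_left h2 hlog.le
      have h4 : Real.log θ * (β * n) = - (γ * n) / 2 := by
        have hl := hlog.ne
        rw [hβd]; field_simp
      have : 0 < γ * n := by positivity
      linarith
    simp only [Finset.card_univ, Fintype.card_pi, Fintype.card_bool, Finset.prod_const,
      Fintype.card_fin]
    push_cast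
    rw [mul_comm]
    gcongr)
  set F := S (fun k : Fin K => -M + k * (δ / 4)) δ W Finset.univ with hF
  have hFc : Real.exp (b * n) ≤ F.card := by
    have h1 : Real.exp (b * n) ≤ 2 ^ (⌊β * n⌋₊ + 1) := by
      rw [← Real.rpow_natCast, Real.rpow_def_of_pos (by norm_num : (0:ℝ) < 2), Real.exp_le_exp]
      have h2 := (Nat.lt_floor_add_one (β * n)).le
      have := mul_le_mul_of_nonneg_left h2 (Real.log_pos (by norm_num : (1:ℝ) < 2)).le
      push_cast
      rw [hbd]; linarith
    refine h1.trans ?_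
    exact_mod_cast hpow
  obtain ⟨u, hu, hun⟩ : ∃ u ∈ F,
      c * n < ((Finset.univ.filter (fun j => (u j).isSome)).card : ℝ) := by
    by_contra hcon
    push Not at hcon
    have h1 := count F x (c * n) hx hx1.le hcon
    have h2 : x ^ (c * n) = Real.exp (-(b * n / 4)) := by
      rw [Real.rpow_def_of_pos hx]; congr 1
      have hl := hlx.ne
      rw [hcd]; field_simp
    have h3 : Real.exp (b * n) * x ^ (c * n) ≤ Real.exp (K * x * n) :=
      (mul_le_mul_of_nonneg_right hFc (by positivity)).trans h1
    rw [h2, ← Real.exp_add, Real.exp_le_exp] at h3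
    have h4 : K * x * n ≤ b / 4 * n := by gcongr
    have : 0 < b * n := by positivity
    linarith
  have hsum : (Finset.univ.filter (fun j => (u j).isSome)).card =
      ∑ k : Fin K, (Finset.univ.filter (fun j => u j = some k)).card := by
    rw [← Finset.card_biUnion]
    · congr 1
      ext j
      simp [Option.isSome_iff_exists]
    · intro k _ l _ hkl
      simp only [Function.onFun]
      rw [Finset.disjoint_left]
      intro j h1 h2
      simp only [Finset.mem_filter, Finset.mem_univ, true_and] at h1 h2
      rw [h1] at h2
      exact hkl (Option.some.inj h2)
  obtain ⟨k, hk⟩ : ∃ k : Fin K,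
      c / K * n ≤ ((Finset.univ.filter (fun j => u j = some k)).card : ℝ) := by
    by_contra hcon
    push Not at hcon
    have h1 : ∑ k : Fin K, ((Finset.univ.filter (fun j => u j = some k)).card : ℝ) ≤
        ∑ k : Fin K, c / K * n := Finset.sum_le_sum fun k _ => (hcon k).le
    rw [hsum] at hun
    push_cast at hun
    have h2 : ∑ k : Fin K, c / K * n = c * n := by simp; field_simp
    linarith
  refine ⟨_, _, Finset.mem_image_of_mem _ (Finset.mem_univ k), hk, fun σ => ?_⟩
  have hu' : Sh (fun k : Fin K => -M + k * (δ / 4)) δ W Finset.univ u := by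
    simpa [hF, S] using hu
  obtain ⟨ε, _, h⟩ := hu' σ
  exact ⟨ε, fun j hj => h j k (by simpa using hj)⟩

end FLM

namespace FLM

lemma exists_vec {n : ℕ} {p : ℝ≥0∞} [Fact (1 ≤ p)] (hn : 1 ≤ n) (δ : ℝ) (hδ : 0 < δ)
    (E : Set (PiLp p (fun _ : Fin n => ℝ)))
    (hE : Metric.closedBall 0 δ ⊆ convexHull ℝ (E ∪ {0})) (ε : Fin n → Bool) :
    ∃ v ∈ E, δ * n * (n : ℝ) ^ (-(1 / p).toReal) ≤ ∑ i, sg (ε i) * v i := by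
  by_contra hcon
  push Not at hcon
  have hn0 : (0:ℝ) < n := by exact_mod_cast hn
  set N := (n : ℝ) ^ (-(1 / p).toReal) with hN
  have hN0 : 0 < N := by positivity
  have hconv : Convex ℝ {x : PiLp p (fun _ : Fin n => ℝ) | ∑ i, sg (ε i) * x i < δ * n * N} := by
    refine convex_halfSpace_lt ⟨?_, ?_⟩ _
    · intro x y; simp [mul_add, Finset.sum_add_distrib]
    · intro a x; simp [Finset.mul_sum]; refine Finset.sum_congr rfl fun i _ => by ring
  have hsub := convexHull_min (s := E ∪ {0}) (by
    rintro x (hx | hx)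
    · exact hcon x hx
    · rw [Set.mem_singleton_iff] at hx
      subst hx
      simp
      positivity) hconv
  have hy : (WithLp.toLp p (fun i => δ * N * sg (ε i)) : PiLp p (fun _ : Fin n => ℝ)) ∈
      Metric.closedBall 0 δ := by
    rw [mem_closedBall_zero_iff]
    rcases eq_or_ne p ∞ with rfl | hp
    · have hN1 : N = 1 := by simp [hN]
      rw [PiLp.norm_eq_ciSup]
      have : Nonempty (Fin n) := ⟨⟨0, hn⟩⟩
      refine ciSup_le fun i => ?_
      simp [hN1, abs_sg, abs_of_pos hδ]
    · have hp1 : 1 ≤ p.toReal := by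
        have := (ENNReal.toReal_le_toReal (by simp) hp).2 (Fact.out : 1 ≤ p)
        simpa using this
      have hp0 : 0 < p.toReal := by linarith
      rw [PiLp.norm_eq_sum hp0]
      have e : ∀ i, ‖(WithLp.toLp p (fun i => δ * N * sg (ε i)) : PiLp p (fun _ : Fin n => ℝ)) i‖
          = δ * N := by
        intro i
        simp [abs_mul, abs_sg, abs_of_pos hδ, abs_of_pos hN0]
      simp only [e]
      rw [Finset.sum_const, nsmul_eq_mul, Finset.card_univ, Fintype.card_fin,
        Real.mul_rpow hδ.le hN0.le]
      have e2 : N ^ p.toReal = (n : ℝ)⁻¹ := by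
        rw [hN, ← Real.rpow_mul hn0.le, ← Real.rpow_neg_one]
        congr 1
        rw [ENNReal.toReal_div]; simp; field_simp
      rw [e2]
      have : (n : ℝ) * (δ ^ p.toReal * (n : ℝ)⁻¹) = δ ^ p.toReal := by field_simp
      rw [this, ← Real.rpow_mul hδ.le, mul_one_div_cancel hp0.ne', Real.rpow_one]
  have := hsub (hE hy)
  rw [Set.mem_ofPred_eq] at this
  have e : ∀ i, sg (ε i) * (δ * N * sg (ε i)) = δ * N := by
    intro i
    rw [mul_left_comm, sg_mul_sg, mul_one]
  simp only [e, Finset.sum_const, nsmul_eq_mul, Finset.card_univ, Fintype.card_fin] at this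
  linarith

noncomputable def cl (M w : ℝ) : ℝ := max (-M) (min M w)

lemma abs_cl (M w : ℝ) (hM : 1 ≤ M) : |cl M w| ≤ M := by
  rw [abs_le]; unfold cl
  exact ⟨le_max_left _ _, max_le (by linarith) (min_le_left _ _)⟩

lemma cl_eq (M w : ℝ) (hw : |w| ≤ M) : cl M w = w := by
  have := abs_le.1 hw
  unfold cl; rw [min_eq_right this.2, max_eq_right this.1]

lemma cl_sub (M w : ℝ) (hM : 1 ≤ M) : |w - cl M w| ≤ |w| := by
  unfold cl
  rcases le_total M w with h | h
  · rw [min_eq_left h, max_eq_right (by linarith), abs_of_nonneg (by linarith),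
      abs_of_nonneg (by linarith)]; linarith
  · rw [min_eq_right h]
    rcases le_total (-M) w with h' | h'
    · rw [max_eq_right h']; simp
    · rw [max_eq_left h', abs_of_nonpos (by linarith), abs_of_nonpos (by linarith)]; linarith

lemma trunc (δ : ℝ) (hδ : 0 < δ) (p : ℝ≥0∞) [Fact (1 ≤ p)] (hp : 1 < p) :
    ∃ M : ℝ, 1 ≤ M ∧ ∀ n : ℕ, 1 ≤ n → ∀ v : PiLp p (fun _ : Fin n => ℝ), ‖v‖ ≤ 1 →
      ∑ i, |v i / (n : ℝ) ^ (-(1 / p).toReal) - cl M (v i / (n : ℝ) ^ (-(1 / p).toReal))|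
        ≤ δ / 8 * n := by
  rcases eq_or_ne p ∞ with rfl | hpt
  · refine ⟨1, le_rfl, fun n hn v hv => ?_⟩
    have : ∀ i, |v i / (n : ℝ) ^ (-(1 / (∞ : ℝ≥0∞)).toReal) -
        cl 1 (v i / (n : ℝ) ^ (-(1 / (∞ : ℝ≥0∞)).toReal))| = 0 := by
      intro i
      have h1 : |v i| ≤ 1 := (PiLp.norm_apply_le v i).trans hv
      rw [show (n : ℝ) ^ (-(1 / (∞ : ℝ≥0∞)).toReal) = 1 by simp, div_one, cl_eq _ _ h1]
      simp
    simp only [this, Finset.sum_const_zero]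
    positivity
  · have hp1 : 1 < p.toReal := by
      have := (ENNReal.toReal_lt_toReal (by simp) hpt).2 hp
      simpa using this
    have hp0 : 0 < p.toReal := by linarith
    have ht := tendsto_rpow_neg_atTop (show 0 < p.toReal - 1 by linarith)
    obtain ⟨M, hM1, hM2⟩ := ((ht.eventually_lt_const (show 0 < δ / 8 by positivity)).and
      (Filter.eventually_ge_atTop 1)).exists
    refine ⟨M, hM2, fun n hn v hv => ?_⟩
    have hn0 : (0:ℝ) < n := by exact_mod_cast hn
    set N := (n : ℝ) ^ (-(1 / p).toReal) with hN
    have hN0 : 0 < N := by positivity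
    have e2 : N ^ p.toReal = (n : ℝ)⁻¹ := by
      rw [hN, ← Real.rpow_mul hn0.le, ← Real.rpow_neg_one]
      congr 1
      rw [ENNReal.toReal_div]; simp; field_simp
    have key : ∀ i, |v i / N - cl M (v i / N)| ≤ δ / 8 * (n * |v i| ^ p.toReal) := by
      intro i
      have e3 : (n : ℝ) * |v i| ^ p.toReal = |v i / N| ^ p.toReal := by
        rw [abs_div, abs_of_pos hN0, Real.div_rpow (abs_nonneg _) hN0.le, e2]
        field_simp
      rw [e3]
      set w := v i / N
      rcases le_or_gt |w| M with h | h
      · rw [cl_eq _ _ h]; simp; positivity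
      · have hw0 : 0 < |w| := by linarith
        refine (cl_sub M w hM2).trans ?_
        have h1 : |w| = |w| ^ (-(p.toReal - 1)) * |w| ^ p.toReal := by
          rw [← Real.rpow_add hw0]; simp
        have h2 : |w| ^ (-(p.toReal - 1)) ≤ M ^ (-(p.toReal - 1)) :=
          Real.rpow_le_rpow_of_nonpos (by linarith) h.le (by linarith)
        calc |w| = |w| ^ (-(p.toReal - 1)) * |w| ^ p.toReal := h1
          _ ≤ δ / 8 * |w| ^ p.toReal := by gcongr; linarith
    refine (Finset.sum_le_sum fun i _ => key i).trans ?_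
    rw [← Finset.mul_sum, ← Finset.mul_sum]
    have hs : ∑ i, |v i| ^ p.toReal ≤ 1 := by
      rw [PiLp.norm_eq_sum hp0] at hv
      have h0 : 0 ≤ ∑ i, ‖v i‖ ^ p.toReal := Finset.sum_nonneg fun i _ => by positivity
      by_contra hcon
      push Not at hcon
      have := Real.one_lt_rpow hcon (show 0 < 1 / p.toReal by positivity)
      simp only [Real.norm_eq_abs] at hv
      linarith
    have : δ / 8 * (n * ∑ i, |v i| ^ p.toReal) ≤ δ / 8 * (n * 1) := by gcongr
    linarith

end FLM

theorem flm_selection (δ : ℝ) (hδ₁ : 0 < δ) (hδ₂ : δ ≤ 1) (p : ℝ≥0∞) [Fact (1 ≤ p)]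
    (hp : 1 < p) :
    ∃ (T : Finset (ℝ × ℝ)) (c' : ℝ), 0 < c' ∧
      (∀ t ∈ T, t.2 + δ ≤ t.1) ∧
      ∀ n : ℕ, 1 ≤ n → ∀ E : Set (PiLp p (fun _ : Fin n => ℝ)),
        E ⊆ Metric.closedBall 0 1 →
        Metric.closedBall 0 δ ⊆ convexHull ℝ (E ∪ {0}) →
        ∃ J : Finset (Fin n), ∃ t ∈ T, c' * (n : ℝ) ≤ J.card ∧
          ∀ σ : Fin n → Fin 2, ∃ v ∈ E,
            (∀ j ∈ J, σ j = 0 → t.1 * (n : ℝ) ^ (-(1 / p).toReal) ≤ v j) ∧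
            (∀ j ∈ J, σ j = 1 → v j ≤ t.2 * (n : ℝ) ^ (-(1 / p).toReal)) := by
  obtain ⟨M, hM, htr⟩ := FLM.trunc δ hδ₁ p hp
  obtain ⟨T, c', hc', hT, hcore⟩ := FLM.core δ M hδ₁ hδ₂ hM
  refine ⟨T, c', hc', fun t ht => (hT t ht).1.ge, fun n hn E hE1 hE2 => ?_⟩
  have hn0 : (0:ℝ) < n := by exact_mod_cast hn
  choose v hvE hv using FLM.exists_vec hn δ hδ₁ E hE2
  specialize htr n hn
  set N := (n : ℝ) ^ (-(1 / p).toReal) with hN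
  have hN0 : 0 < N := by positivity
  obtain ⟨J, t, ht, hJ, hsh⟩ := hcore n hn (fun ε i => FLM.cl M (v ε i / N))
    (fun ε i => FLM.abs_cl M _ hM) (by
      intro ε
      have h1 := htr (v ε) (by simpa using hE1 (hvE ε))
      have h2 : ∑ i, (FLM.sg (ε i) * (v ε i / N) - |v ε i / N - FLM.cl M (v ε i / N)|) ≤
          ∑ i, FLM.sg (ε i) * FLM.cl M (v ε i / N) := by
        refine Finset.sum_le_sum fun i _ => ?_
        have : FLM.sg (ε i) * (v ε i / N - FLM.cl M (v ε i / N)) ≤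
            |v ε i / N - FLM.cl M (v ε i / N)| := by
          refine (le_abs_self _).trans ?_
          rw [abs_mul, FLM.abs_sg, one_mul]
        linarith
      refine le_trans ?_ h2
      rw [Finset.sum_sub_distrib]
      have h3 : δ * n ≤ ∑ i, FLM.sg (ε i) * (v ε i / N) := by
        have : ∑ i, FLM.sg (ε i) * (v ε i / N) = (∑ i, FLM.sg (ε i) * v ε i) / N := by
          rw [Finset.sum_div]
          exact Finset.sum_congr rfl fun i _ => by ring
        rw [this, le_div_iff₀ hN0]
        exact hv ε
      linarith)
  obtain ⟨ht1, ht2, ht3⟩ := hT t ht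
  refine ⟨J, t, ht, hJ, fun σ => ?_⟩
  obtain ⟨ε, hε⟩ := hsh (fun j => decide (σ j = 0))
  refine ⟨v ε, hvE ε, fun j hj hσ => ?_, fun j hj hσ => ?_⟩
  · have h := (hε j hj).1 (by simp [hσ])
    rw [← le_div_iff₀ hN0]
    simp only [FLM.cl] at h
    rcases le_max_iff.1 h with h | h
    · linarith
    · exact h.trans (min_le_right _ _)
  · have h := (hε j hj).2 (by simp [hσ])
    rw [← div_le_iff₀ hN0]
    simp only [FLM.cl] at h
    rcases min_le_iff.1 ((le_max_right _ _).trans h) with h | h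
    · linarith
    · exact h
end

section
/- Let k ∈ ℕ and 0 < r < R ≤ C, and let 1 < p ≤ ∞, 1 ≤ q < ∞ with 1/p + 1/q = 1. Then there exist c, N > 0 and a finite set T ⊆ ℝ^k, depending only on k, r, R, C, p, such that: (1) (1/k)·Σ_{j=1}^k t_j ≥ r for every (t₁,...,t_k) ∈ T; and (2) for any finite set Z with |Z| ≥ N, if for each equidistributed map ψ : Z → {1,...,k} one chooses f_ψ : Z → ℝ with ‖f_ψ‖_p ≤ C and (1/|Z|^{1/q})·Σ_{z∈Z} f_ψ(z) ≥ R, then there exist J ⊆ Z with |J| ≥ c|Z| and (t₁,...,t_k) ∈ T such that every map σ : J → {1,...,k} extends to an equidistributed ψ : Z → {1,...,k} with f_ψ(z) ≥ t_j |Z|^{−1/p} for all j and all z ∈ σ⁻¹(j). -/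
open scoped ENNReal

/-- The `ℓ_p`-norm of a function on a finite set, `1 ≤ p ≤ ∞`. -/
noncomputable def lpNorm (p : ℝ≥0∞) {Z : Type*} [Fintype Z] (f : Z → ℝ) : ℝ :=
  if p = ⊤ then ⨆ z, |f z| else (∑ z, |f z| ^ p.toReal) ^ (1 / p.toReal)

/-- `F` shatters the index set `J` with the patterns prescribed by `τ`. -/
def FTIShatters {A T : Type*} {k n : ℕ} (pat : T → Fin k → A) (F : Finset (Fin n → A))
    (J : Finset (Fin n)) (τ : Fin n → T) : Prop :=
  ∀ σ : Fin n → Fin k, ∃ x ∈ F, ∀ i ∈ J, x i = pat (τ i) (σ i)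

theorem fti_pajor {A T : Type*} [Fintype A] [DecidableEq A] [Fintype T] {k : ℕ}
    (ν : A → ℝ) (hν : ∀ a, 0 ≤ ν a) (pat : T → Fin k → A) (κ K y : ℝ) (hκ0 : 0 ≤ κ)
    (hK0 : 0 ≤ K) (hy0 : 0 < y) (hy1 : y ≤ 1)
    (hκ : ∀ D : Finset A, (∀ t, ∃ j, pat t j ∉ D) → ∑ a ∈ D, ν a ≤ κ)
    (hK : ∑ a, ν a ≤ K) (n : ℕ) :
    ∀ (F : Finset (Fin n → A)) (d : ℕ),
      (∀ J τ, FTIShatters pat F J τ → J.card ≤ d) →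
      ∑ x ∈ F, ∏ i, ν (x i) ≤ (κ + K * Fintype.card T * y) ^ n * (y⁻¹) ^ d := by
  classical
  have hy' : 1 ≤ y⁻¹ := (one_le_inv₀ hy0).2 hy1
  induction n with
  | zero =>
    intro F d _
    have h1 : ∑ x ∈ F, ∏ i, ν (x i) ≤ 1 := by
      simp only [Finset.univ_eq_empty, Finset.prod_empty, Finset.sum_const, nsmul_eq_mul, mul_one]
      have := Finset.card_le_univ F
      simp at this
      exact_mod_cast this
    simpa using h1.trans (one_le_pow₀ hy')
  | succ n ih =>
    intro F d hF
    set b : ℝ := κ + K * Fintype.card T * y with hb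
    have hb0 : 0 ≤ b := by positivity
    set F' : Finset (Fin n → A) := F.image Fin.tail with hF'
    set G : T → Finset (Fin n → A) := fun t =>
      F'.filter (fun x' => ∀ j, (Fin.cons (pat t j) x' : Fin (n + 1) → A) ∈ F) with hG
    set w : (Fin n → A) → ℝ := fun x' => ∏ i, ν (x' i) with hw
    have hw0 : ∀ x', 0 ≤ w x' := fun x' => Finset.prod_nonneg fun i _ => hν _
    have hS' : ∀ J τ, FTIShatters pat F' J τ → J.card ≤ d := by
      intro J τ h
      rcases isEmpty_or_nonempty T with hT | ⟨⟨t0⟩⟩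
      · have : J = ∅ := by
          by_contra hne
          obtain ⟨i, _⟩ := Finset.nonempty_iff_ne_empty.2 hne
          exact hT.elim (τ i)
        simp [this]
      have := hF (J.map (Fin.succEmb n)) (Fin.cons t0 τ) (by
        intro σ
        obtain ⟨x', hx', hx⟩ := h (Fin.tail σ)
        obtain ⟨x, hxF, rfl⟩ := Finset.mem_image.1 hx'
        refine ⟨x, hxF, ?_⟩
        intro i hi
        obtain ⟨i', hi', rfl⟩ := Finset.mem_map.1 hi
        simpa [Fin.tail] using hx i' hi')
      simpa using this
    have hSG : ∀ t J τ, FTIShatters pat (G t) J τ → J.card + 1 ≤ d := by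
      intro t J τ h
      have := hF (insert 0 (J.map (Fin.succEmb n))) (Fin.cons t τ) (by
        intro σ
        obtain ⟨x', hx', hx⟩ := h (Fin.tail σ)
        have hx'' := (Finset.mem_filter.1 hx').2 (σ 0)
        refine ⟨_, hx'', ?_⟩
        intro i hi
        rcases Finset.mem_insert.1 hi with rfl | hi
        · simp
        · obtain ⟨i', hi', rfl⟩ := Finset.mem_map.1 hi
          simpa [Fin.tail] using hx i' hi')
      rw [Finset.card_insert_of_notMem (by simp [Fin.succ_ne_zero])] at this
      simpa using this
    have hVF' : ∑ x' ∈ F', w x' ≤ b ^ n * (y⁻¹) ^ d := ih F' d hS'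
    have hVG : ∀ t, ∑ x' ∈ G t, w x' ≤ y * (b ^ n * (y⁻¹) ^ d) := by
      intro t
      rcases Finset.eq_empty_or_nonempty (G t) with h0 | ⟨x0, hx0⟩
      · rw [h0]; simp; positivity
      · have h1 : 1 ≤ d := by
          have := hSG t ∅ (fun _ => t) (fun σ => ⟨x0, hx0, by simp⟩)
          simpa using this
        obtain ⟨e, rfl⟩ := Nat.exists_eq_add_of_le' h1
        have := ih (G t) e (fun J τ h => by have := hSG t J τ h; omega)
        refine this.trans (le_of_eq ?_)
        rw [pow_succ]; field_simp
    have hsplit : ∑ x ∈ F, ∏ i, ν (x i) =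
        ∑ x' ∈ F', w x' * ∑ a ∈ Finset.univ.filter
          (fun a => (Fin.cons a x' : Fin (n + 1) → A) ∈ F), ν a := by
      rw [← Finset.sum_fiberwise_of_maps_to (s := F) (t := F') (g := Fin.tail)
        (fun x hx => Finset.mem_image_of_mem _ hx)]
      refine Finset.sum_congr rfl fun x' _ => ?_
      rw [Finset.mul_sum]
      refine Finset.sum_bij' (fun x _ => x 0) (fun a _ => Fin.cons a x') ?_ ?_ ?_ ?_ ?_
      · intro x hx
        obtain ⟨hx, rfl⟩ := Finset.mem_filter.1 hx
        simpa using hx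
      · intro a ha
        simpa using ha
      · intro x hx
        obtain ⟨hx, rfl⟩ := Finset.mem_filter.1 hx
        simp
      · intro a ha; simp
      · intro x hx
        obtain ⟨hx, rfl⟩ := Finset.mem_filter.1 hx
        rw [Fin.prod_univ_succ, mul_comm]; rfl
    have hfib : ∀ x' ∈ F', ∑ a ∈ Finset.univ.filter
          (fun a => (Fin.cons a x' : Fin (n + 1) → A) ∈ F), ν a ≤
          κ + ∑ t, if x' ∈ G t then K else 0 := by
      intro x' hx'
      have hsum0 : ∀ t ∈ (Finset.univ : Finset T), 0 ≤ (if x' ∈ G t then K else 0) := by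
        intro t _; split_ifs <;> simp [hK0]
      by_cases h : ∃ t, x' ∈ G t
      · obtain ⟨t, ht⟩ := h
        have h1 := Finset.single_le_sum hsum0 (Finset.mem_univ t)
        rw [if_pos ht] at h1
        have h2 : ∑ a ∈ Finset.univ.filter
          (fun a => (Fin.cons a x' : Fin (n + 1) → A) ∈ F), ν a ≤ ∑ a, ν a :=
          Finset.sum_le_sum_of_subset_of_nonneg (Finset.filter_subset _ _) fun a _ _ => hν a
        linarith
      · push Not at h
        have := hκ (Finset.univ.filter (fun a => (Fin.cons a x' : Fin (n + 1) → A) ∈ F)) (by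
          intro t
          have := h t
          simp only [hG, Finset.mem_filter, not_and, not_forall] at this
          obtain ⟨j, hj⟩ := this hx'
          exact ⟨j, by simpa using hj⟩)
        have := Finset.sum_nonneg hsum0
        linarith
    calc ∑ x ∈ F, ∏ i, ν (x i) ≤ ∑ x' ∈ F', w x' * (κ + ∑ t, if x' ∈ G t then K else 0) := by
          rw [hsplit]
          exact Finset.sum_le_sum fun x' hx' => mul_le_mul_of_nonneg_left (hfib x' hx') (hw0 x')
      _ = κ * ∑ x' ∈ F', w x' + K * ∑ t, ∑ x' ∈ G t, w x' := by
          simp only [mul_add, Finset.sum_add_distrib, Finset.mul_sum]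
          congr 1
          · exact Finset.sum_congr rfl fun _ _ => mul_comm _ _
          · rw [Finset.sum_comm]
            refine Finset.sum_congr rfl fun t _ => ?_
            simp only [hG, Finset.sum_filter]
            refine Finset.sum_congr rfl fun x' hx' => ?_
            simp only [Finset.mem_filter, hx', true_and]
            split_ifs <;> ring
      _ ≤ κ * (b ^ n * (y⁻¹) ^ d) + K * ∑ t : T, y * (b ^ n * (y⁻¹) ^ d) := by
          gcongr with t _
          exact hVG t
      _ = b ^ (n + 1) * (y⁻¹) ^ d := by
          simp only [Finset.sum_const, Finset.card_univ, nsmul_eq_mul]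
          rw [pow_succ]; nth_rewrite 3 [hb]; ring

theorem fti_central (k : ℕ) (m : ℕ) :
    k ^ (k * m) * ((m + 1).factorial) ^ k ≤ (k * (m + 1)).factorial * (m + 1) ^ k := by
  induction m with
  | zero => simp; exact Nat.factorial_pos _
  | succ m ih =>
    have h1 : (k * (m + 1)).factorial * (k * (m + 1)) ^ k ≤ (k * (m + 1 + 1)).factorial := by
      have := @Nat.factorial_mul_pow_le_factorial (k * (m + 1)) k
      rw [show k * (m + 1 + 1) = k * (m + 1) + k by ring]
      refine le_trans ?_ this
      gcongr
      omega
    calc k ^ (k * (m + 1)) * ((m + 1 + 1).factorial) ^ k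
        = (k ^ (k * m) * ((m + 1).factorial) ^ k) * (k ^ k * (m + 1 + 1) ^ k) := by
          rw [Nat.factorial_succ (m + 1), mul_pow, Nat.mul_succ, pow_add]; ring
      _ ≤ ((k * (m + 1)).factorial * (m + 1) ^ k) * (k ^ k * (m + 1 + 1) ^ k) := by gcongr
      _ = ((k * (m + 1)).factorial * (k * (m + 1)) ^ k) * (m + 1 + 1) ^ k := by
          rw [mul_pow]; ring
      _ ≤ _ := by gcongr

theorem fti_exists_eq (k : ℕ) (hk : 1 ≤ k) (Z : Type) [Fintype Z] :
    ∃ ψ : Z → Fin k, ∀ j, (Finset.univ.filter fun z => ψ z = j).card =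
      Fintype.card Z / k + if (j : ℕ) < Fintype.card Z % k then 1 else 0 := by
  have e := Fintype.equivFin Z
  refine ⟨fun z => ⟨(e z : ℕ) % k, Nat.mod_lt _ hk⟩, fun j => ?_⟩
  have := Nat.count_modEq_card (Fintype.card Z) hk j
  rw [Nat.mod_eq_of_lt j.2] at this
  rw [← this, Nat.count_eq_card_filter_range]
  refine Finset.card_bij (fun z _ => (e z : ℕ)) ?_ ?_ ?_
  · intro z hz
    have := (Finset.mem_filter.1 hz).2
    simp only [Fin.ext_iff] at this
    simp [Nat.ModEq, this, Nat.mod_eq_of_lt j.2]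
  · intro a _ b _ h
    exact e.injective (Fin.ext h)
  · intro b hb
    simp only [Finset.mem_filter, Finset.mem_range, Nat.ModEq, Nat.mod_eq_of_lt j.2] at hb
    exact ⟨e.symm ⟨b, hb.1⟩, by simp [Fin.ext_iff, hb.2], by simp⟩

theorem fti_orbit (k : ℕ) (Z : Type) [Fintype Z] [DecidableEq Z] (ψ : Z → Fin k)
    (S : Finset (Z → Fin k)) (hS : ∀ g : Equiv.Perm Z, ψ ∘ g ∈ S) :
    (Fintype.card Z).factorial ≤
      (∏ j, ((Finset.univ.filter fun z => ψ z = j).card).factorial) * S.card := by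
  classical
  have h := Finset.card_le_mul_card_image (f := fun g : Equiv.Perm Z => ψ ∘ g) Finset.univ
    (∏ j, ((Finset.univ.filter fun z => ψ z = j).card).factorial) (by
      intro b hb
      obtain ⟨g0, _, rfl⟩ := Finset.mem_image.1 hb
      have h1 := DomMulAct.stabilizer_card ψ
      simp only [Fintype.card_subtype] at h1
      rw [← h1]
      refine Finset.card_le_card_of_injOn (fun g => g * g0⁻¹) ?_ ?_
      · intro g hg
        simp only [Finset.coe_filter, Finset.mem_univ, true_and, Set.mem_ofPred_eq] at hg ⊢
        funext z
        have := congrFun hg (g0⁻¹ z)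
        simpa using this
      · intro a _ b _ hab
        simpa using hab)
  rw [Finset.card_univ, Fintype.card_perm] at h
  refine h.trans (Nat.mul_le_mul_left _ (Finset.card_le_card ?_))
  intro x hx
  obtain ⟨g, _, rfl⟩ := Finset.mem_image.1 hx
  exact hS g

theorem fti_count (k : ℕ) (hk : 1 ≤ k) (Z : Type) [Fintype Z] (hZ : k ≤ Fintype.card Z)
    (S : Finset (Z → Fin k)) (hS : ∀ ψ, Equidistributed k ψ → ψ ∈ S) :
    k ^ (Fintype.card Z) ≤ S.card * (Fintype.card Z) ^ k * k ^ (2 * k) := by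
  classical
  obtain ⟨ψ, hψ⟩ := fti_exists_eq k hk Z
  set n := Fintype.card Z with hn
  have hk0 : (0 : ℝ) < k := by exact_mod_cast hk
  have hS' : ∀ g : Equiv.Perm Z, ψ ∘ g ∈ S := by
    intro g
    apply hS
    intro j
    have hc : (Finset.univ.filter fun z => (ψ ∘ g) z = j).card =
        (Finset.univ.filter fun z => ψ z = j).card := by
      refine Finset.card_bij (fun z _ => g z) ?_ ?_ ?_
      · intro z hz; simpa using hz
      · intro a _ b _ h; exact g.injective h
      · intro b hb; exact ⟨g⁻¹ b, by simpa using hb, by simp⟩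
    rw [hc, hψ j]
    have hd : (n : ℝ) = k * (n / k : ℕ) + (n % k : ℕ) := by
      exact_mod_cast (Nat.div_add_mod n k).symm
    have hm : ((n % k : ℕ) : ℝ) < k := by exact_mod_cast Nat.mod_lt n hk
    have hm0 : (0 : ℝ) ≤ ((n % k : ℕ) : ℝ) := Nat.cast_nonneg _
    have he : (n : ℝ) / k = (n / k : ℕ) + ((n % k : ℕ) : ℝ) / k := by
      rw [hd]; field_simp
    have h1 : ((n % k : ℕ) : ℝ) / k < 1 := by rw [div_lt_one hk0]; exact hm
    have h0 : 0 ≤ ((n % k : ℕ) : ℝ) / k := by positivity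
    rw [← hn, he, abs_lt]
    split_ifs with h
    · have : 0 < ((n % k : ℕ) : ℝ) / k := by
        apply div_pos _ hk0
        exact_mod_cast (by omega : 0 < n % k)
      push_cast
      constructor <;> linarith
    · push_cast
      constructor <;> linarith
  have h1 := fti_orbit k Z ψ S hS'
  rw [← hn] at h1
  set s := n % k with hs
  obtain ⟨m, hm⟩ : ∃ m, n / k = m + 1 :=
    Nat.exists_eq_add_of_le' (Nat.div_pos hZ hk)
  have hnd : n = k * (m + 1) + s := by rw [← hm, hs]; exact (Nat.div_add_mod n k).symm
  have hsk : s < k := Nat.mod_lt _ hk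
  have hprod : (∏ j, ((Finset.univ.filter fun z => ψ z = j).card).factorial) =
      ((m + 1).factorial) ^ k * (m + 2) ^ s := by
    have : ∀ j : Fin k, ((Finset.univ.filter fun z => ψ z = j).card).factorial =
        (m + 1).factorial * if (j : ℕ) < s then (m + 2) else 1 := by
      intro j
      rw [hψ j, hm]
      split_ifs
      · rw [Nat.factorial_succ (m + 1)]; ring
      · simp
    simp only [this, Finset.prod_mul_distrib, Finset.prod_const, Finset.card_univ, Fintype.card_fin]
    congr 1
    rw [Fin.prod_univ_eq_prod_range (fun j => if j < s then m + 2 else 1) k]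
    rw [Finset.prod_ite]
    simp only [Finset.prod_const, one_pow, mul_one]
    congr 1
    have : (Finset.range k).filter (fun x => x < s) = Finset.range s := by
      ext x; simp; omega
    rw [this, Finset.card_range]
  rw [hprod] at h1
  have h2 : (k * (m + 1)).factorial * (m + 2) ^ s ≤ n.factorial := by
    have := @Nat.factorial_mul_pow_le_factorial (k * (m + 1)) s
    rw [hnd]
    have h2' : m + 2 ≤ k * (m + 1) + 1 := by nlinarith
    exact le_trans (Nat.mul_le_mul_left _ (Nat.pow_le_pow_left h2' _)) this
  have h3 : (k * (m + 1)).factorial ≤ ((m + 1).factorial) ^ k * S.card := by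
    refine Nat.le_of_mul_le_mul_right (c := (m + 2) ^ s) ?_ (by positivity)
    calc _ ≤ _ := h2
      _ ≤ _ := h1
      _ = _ := by ring
  have h4 := fti_central k m
  have h5 : k ^ (k * m) ≤ S.card * (m + 1) ^ k := by
    refine Nat.le_of_mul_le_mul_right (c := ((m + 1).factorial) ^ k) ?_ (by positivity)
    calc _ ≤ _ := h4
      _ ≤ (((m + 1).factorial) ^ k * S.card) * (m + 1) ^ k := by gcongr
      _ = _ := by ring
  have hmn : m + 1 ≤ n := by rw [hnd]; nlinarith
  calc k ^ n ≤ k ^ (k * m + 2 * k) := by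
        apply Nat.pow_le_pow_right hk
        rw [hnd]; nlinarith
    _ = k ^ (k * m) * k ^ (2 * k) := pow_add _ _ _
    _ ≤ (S.card * (m + 1) ^ k) * k ^ (2 * k) := by gcongr
    _ ≤ _ := by gcongr

theorem fti_numeric (κ X K D : ℝ) (k : ℕ) (hκ : 0 ≤ κ) (hX : κ < X) (hK : 0 ≤ K) :
    ∃ (y : ℝ) (s N : ℕ), 0 < y ∧ y ≤ 1 ∧ ∀ n : ℕ, N ≤ n →
      (κ + K * y) ^ n * (y⁻¹) ^ (n / (s + 1)) * ((n : ℝ) ^ k * D) < X ^ n := by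
  have hX0 : 0 < X := lt_of_le_of_lt hκ hX
  set y : ℝ := min 1 ((X - κ) / (2 * (K + 1))) with hy
  have hy0 : 0 < y := lt_min one_pos (div_pos (by linarith) (by linarith))
  have hy1 : y ≤ 1 := min_le_left _ _
  set κ1 : ℝ := (κ + X) / 2 with hκ1
  have hκ1' : κ + K * y ≤ κ1 := by
    have h1 : y ≤ (X - κ) / (2 * (K + 1)) := min_le_right _ _
    have h2 : (K + 1) * y ≤ (X - κ) / 2 := by
      rw [le_div_iff₀ (by linarith)] at h1
      linarith
    rw [hκ1]; linarith
  have hκ10 : 0 < κ1 := by rw [hκ1]; linarith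
  set κ2 : ℝ := (κ1 + X) / 2 with hκ2
  have hκ12 : κ1 < κ2 := by rw [hκ2, hκ1]; linarith
  have hκ2X : κ2 < X := by rw [hκ2, hκ1]; linarith
  set β : ℝ := κ2 / κ1 with hβ
  have hβ1 : 1 < β := by rw [hβ, one_lt_div hκ10]; exact hκ12
  obtain ⟨s, hs⟩ := pow_unbounded_of_one_lt (y⁻¹) hβ1
  have hq : |κ2 / X| < 1 := by
    rw [abs_of_nonneg (by positivity), div_lt_one hX0]; exact hκ2X
  have ht := (tendsto_pow_const_mul_const_pow_of_abs_lt_one k hq).mul_const D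
  rw [zero_mul] at ht
  obtain ⟨N, hN⟩ := Filter.eventually_atTop.1 (ht.eventually (gt_mem_nhds (zero_lt_one)))
  refine ⟨y, s, N, hy0, hy1, fun n hn => ?_⟩
  have h1 := hN n hn
  have h2 : (y⁻¹) ^ (n / (s + 1)) ≤ β ^ n := by
    calc (y⁻¹) ^ (n / (s + 1)) ≤ (β ^ s) ^ (n / (s + 1)) := by
          apply pow_le_pow_left₀ (by positivity) hs.le
      _ = β ^ (s * (n / (s + 1))) := by rw [pow_mul]
      _ ≤ β ^ n := by
          apply pow_le_pow_right₀ hβ1.le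
          have := Nat.div_mul_le_self n (s + 1)
          nlinarith
  have h3 : (κ + K * y) ^ n * (y⁻¹) ^ (n / (s + 1)) ≤ κ2 ^ n := by
    calc _ ≤ κ1 ^ n * β ^ n := by gcongr
      _ = κ2 ^ n := by rw [← mul_pow, hβ]; congr 1; field_simp
  have hXn : 0 < X ^ n := by positivity
  have h0 : 0 ≤ (κ + K * y) ^ n * (y⁻¹) ^ (n / (s + 1)) := by positivity
  by_cases hD : 0 ≤ D
  · calc _ ≤ κ2 ^ n * ((n : ℝ) ^ k * D) := by gcongr
      _ = ((n : ℝ) ^ k * (κ2 / X) ^ n * D) * X ^ n := by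
          have e : κ2 ^ n = (κ2 / X) ^ n * X ^ n := by
            rw [← mul_pow, div_mul_cancel₀ _ hX0.ne']
          rw [e]; ring
      _ < 1 * X ^ n := by gcongr
      _ = _ := one_mul _
  · refine lt_of_le_of_lt (mul_nonpos_of_nonneg_of_nonpos h0 ?_) hXn
    exact mul_nonpos_of_nonneg_of_nonpos (by positivity) (le_of_not_ge hD)

theorem fti_trunc (R C ε : ℝ) (hC : 0 < C) (hε : 0 < ε) (p q : ℝ≥0∞) (hp : 1 < p)
    (hq : 1 ≤ q) (hpq : 1 / p + 1 / q = 1) :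
    ∃ M : ℝ, 0 < M ∧ ∀ (Z : Type) [Fintype Z], 0 < Fintype.card Z → ∀ f : Z → ℝ,
      lpNorm p f ≤ C → R * (Fintype.card Z : ℝ) ^ (1 / q).toReal ≤ ∑ z, f z →
      (R - ε) * Fintype.card Z ≤
        ∑ z, min (f z * (Fintype.card Z : ℝ) ^ (1 / p).toReal) M := by
  have hp0 : p ≠ 0 := (zero_lt_one.trans hp).ne'
  have hq0 : q ≠ 0 := (zero_lt_one.trans_le hq).ne'
  have hαβ : (1 / p).toReal + (1 / q).toReal = 1 := by
    rw [← ENNReal.toReal_add (by simp [hp0]) (by simp [hq0]), hpq]; simp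
  set α := (1 / p).toReal with hα
  set β := (1 / q).toReal with hβ
  have hmean : ∀ (Z : Type) [Fintype Z], 0 < Fintype.card Z → ∀ f : Z → ℝ,
      R * (Fintype.card Z : ℝ) ^ β ≤ ∑ z, f z →
      R * (Fintype.card Z : ℝ) ≤ ∑ z, f z * (Fintype.card Z : ℝ) ^ α := by
    intro Z _ hZ f hf
    have hn : (0 : ℝ) < Fintype.card Z := by exact_mod_cast hZ
    have := mul_le_mul_of_nonneg_right hf (Real.rpow_nonneg hn.le α)
    rw [mul_assoc, ← Real.rpow_add hn, add_comm β α, hαβ, Real.rpow_one, Finset.sum_mul] at this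
    exact this
  by_cases hpt : p = ⊤
  · refine ⟨C, hC, fun Z _ hZ f hf hs => ?_⟩
    have hn : (0 : ℝ) < Fintype.card Z := by exact_mod_cast hZ
    have h1 := hmean Z hZ f hs
    have hα0 : α = 0 := by simp [hα, hpt]
    rw [lpNorm, if_pos hpt] at hf
    have h2 : ∀ z, min (f z * (Fintype.card Z : ℝ) ^ α) C = f z * (Fintype.card Z : ℝ) ^ α := by
      intro z
      rw [hα0]
      simp only [Real.rpow_zero, mul_one]
      apply min_eq_left
      refine (le_abs_self _).trans (le_trans ?_ hf)
      exact le_ciSup (f := fun z => |f z|) (Set.finite_range _).bddAbove z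
    simp only [h2]
    nlinarith
  · set P := p.toReal with hP
    have hP1 : 1 < P := by
      have := (ENNReal.toReal_lt_toReal ENNReal.one_ne_top hpt).2 hp
      simpa using this
    have hαP : α = 1 / P := by simp [hα, hP, ENNReal.toReal_inv]
    set M : ℝ := (C ^ P / ε) ^ (1 / (P - 1)) with hM
    have hCP : 0 < C ^ P := Real.rpow_pos_of_pos hC _
    have hM0 : 0 < M := Real.rpow_pos_of_pos (by positivity) _
    have hMP : M ^ (P - 1) = C ^ P / ε := by
      rw [hM, ← Real.rpow_mul (by positivity), one_div, inv_mul_cancel₀ (by linarith),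
        Real.rpow_one]
    refine ⟨M, hM0, fun Z _ hZ f hf hs => ?_⟩
    have hn : (0 : ℝ) < Fintype.card Z := by exact_mod_cast hZ
    have h1 := hmean Z hZ f hs
    rw [lpNorm, if_neg hpt, ← hP] at hf
    have hS0 : 0 ≤ ∑ z, |f z| ^ P := Finset.sum_nonneg fun z _ => Real.rpow_nonneg (abs_nonneg _) _
    have hf' : ∑ z, |f z| ^ P ≤ C ^ P := by
      have := Real.rpow_le_rpow (Real.rpow_nonneg hS0 _) hf (by linarith : 0 ≤ P)
      rwa [← Real.rpow_mul hS0, one_div, inv_mul_cancel₀ (by linarith), Real.rpow_one] at this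
    have h2 : ∀ z, f z * (Fintype.card Z : ℝ) ^ α - |f z| ^ P * (Fintype.card Z * (ε / C ^ P)) ≤
        min (f z * (Fintype.card Z : ℝ) ^ α) M := by
      intro z
      set g := f z * (Fintype.card Z : ℝ) ^ α with hg
      have hgP : |g| ^ P = |f z| ^ P * Fintype.card Z := by
        rw [hg, abs_mul, abs_of_nonneg (Real.rpow_nonneg hn.le α),
          Real.mul_rpow (abs_nonneg _) (Real.rpow_nonneg hn.le α), ← Real.rpow_mul hn.le, hαP,
          one_div, inv_mul_cancel₀ (by linarith), Real.rpow_one]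
      rw [← mul_assoc, ← hgP]
      have h0 : 0 ≤ |g| ^ P * (ε / C ^ P) :=
        mul_nonneg (Real.rpow_nonneg (abs_nonneg _) _) (by positivity)
      rcases le_total g M with h | h
      · rw [min_eq_left h]; linarith
      · have hg0 : 0 < g := hM0.trans_le h
        have h3 : C ^ P / ε ≤ g ^ (P - 1) := by
          rw [← hMP]; exact Real.rpow_le_rpow hM0.le h (by linarith)
        have h4 : g ≤ |g| ^ P * (ε / C ^ P) := by
          rw [abs_of_pos hg0]
          have h5 : g ^ P = g ^ (P - 1) * g := by
            rw [← Real.rpow_add_one hg0.ne']; congr 1; ring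
          rw [h5]
          have h6 : 1 ≤ g ^ (P - 1) * (ε / C ^ P) := by
            calc (1 : ℝ) = C ^ P / ε * (ε / C ^ P) := by field_simp
              _ ≤ _ := by gcongr
          nlinarith
        rw [min_eq_right h]; linarith
    have h3 := Finset.sum_le_sum fun z (_ : z ∈ Finset.univ) => h2 z
    rw [Finset.sum_sub_distrib] at h3
    have h4 : (∑ z, |f z| ^ P) * (Fintype.card Z * (ε / C ^ P)) ≤ ε * Fintype.card Z := by
      calc _ ≤ C ^ P * (Fintype.card Z * (ε / C ^ P)) := by gcongr
        _ = _ := by field_simp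
    rw [Finset.sum_mul] at h4
    linarith

theorem fti_level (k : ℕ) (M ε : ℝ) (hM : 0 < M) (hε : 0 < ε) :
    ∃ (m : ℕ) (v : ℕ → ℝ), Monotone v ∧ v 0 = -(k * M) ∧ v m = M ∧
      ∀ g : ℝ, ∃ l : Fin (m + 1), min g M - ε ≤ v l ∧ ((l : ℕ) ≠ 0 → v l ≤ g) := by
  obtain ⟨m, hm⟩ := exists_nat_gt ((k + 1) * M / ε)
  have hW : 0 < (k + 1) * M := by positivity
  have hm0 : (0 : ℝ) < m := lt_trans (by positivity) hm
  set δ : ℝ := (k + 1) * M / m with hδ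
  have hδ0 : 0 < δ := by positivity
  have hδε : δ ≤ ε := by
    rw [hδ, div_le_iff₀ hm0]
    rw [div_lt_iff₀ hε] at hm
    linarith
  have hδm : δ * m = (k + 1) * M := by rw [hδ]; field_simp
  refine ⟨m, fun l => -(k * M) + δ * l, ?_, by simp, ?_, ?_⟩
  · intro a b hab
    have : (a : ℝ) ≤ b := by exact_mod_cast hab
    simp only
    gcongr
  · simp only [hδm]; ring
  intro g
  by_cases h1 : M ≤ g
  · refine ⟨⟨m, by omega⟩, ?_, fun _ => ?_⟩
    · simp only [hδm]
      have := min_le_right g M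
      linarith
    · simp only [hδm]; linarith
  push Not at h1
  by_cases h2 : g < -(k * M)
  · refine ⟨0, ?_, fun h => by simp at h⟩
    have := min_le_left g M
    simp; linarith [min_le_left g M]
  push Not at h2
  have hx0 : 0 ≤ (g + k * M) / δ := div_nonneg (by linarith) hδ0.le
  have hfl := Nat.floor_le hx0
  have hfl' := Nat.lt_floor_add_one ((g + k * M) / δ)
  rw [le_div_iff₀ hδ0] at hfl
  rw [div_lt_iff₀ hδ0] at hfl'
  refine ⟨⟨⌊(g + k * M) / δ⌋₊, ?_⟩, ?_, fun _ => ?_⟩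
  · have : (⌊(g + k * M) / δ⌋₊ : ℝ) < m := by
      by_contra h
      push Not at h
      nlinarith
    have : ⌊(g + k * M) / δ⌋₊ < m := by exact_mod_cast this
    omega
  · simp only
    have := min_le_left g M
    nlinarith
  · simp only; linarith

/-- The increments of the sequence `u`. -/
def ftiNu (u : ℕ → ℝ) : ℕ → ℝ
  | 0 => u 0
  | l + 1 => u (l + 1) - u l

theorem ftiNu_nonneg (u : ℕ → ℝ) (hu : Monotone u) (h0 : 0 ≤ u 0) (l : ℕ) : 0 ≤ ftiNu u l := by
  cases l with
  | zero => exact h0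
  | succ l => exact sub_nonneg.2 (hu (Nat.le_succ l))

theorem ftiNu_sum (u : ℕ → ℝ) (L : ℕ) : ∑ l ∈ Finset.range (L + 1), ftiNu u l = u L := by
  induction L with
  | zero => simp [ftiNu]
  | succ L ih => rw [Finset.sum_range_succ, ih]; simp [ftiNu]

theorem ftiNu_sum_fin (u : ℕ → ℝ) (m : ℕ) (L : Fin (m + 1)) :
    ∑ l ∈ Finset.Iic L, ftiNu u (l : ℕ) = u L := by
  have h : (Finset.Iic L).map Fin.valEmbedding = Finset.range ((L : ℕ) + 1) := by
    rw [Fin.map_valEmbedding_Iic]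
    ext x; simp
  rw [← ftiNu_sum u L, ← h, Finset.sum_map]
  rfl

theorem fti_zero (k m : ℕ) (M : ℝ) (hM : 0 < M) (v : ℕ → ℝ) (hv : Monotone v)
    (hv0 : v 0 = -(k * M)) (hvm : v m = M) (t : Fin k → Fin (m + 1)) (j0 : Fin k)
    (hj : (t j0 : ℕ) = 0) : ∑ j, v (t j) < 0 := by
  have h1 : ∀ j, v (t j) ≤ M - (if j = j0 then (k + 1) * M else 0) := by
    intro j
    split_ifs with h
    · rw [h, hj, hv0]; linarith
    · rw [← hvm, sub_zero]; exact hv (by have := (t j).2; omega)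
  have h2 := Finset.sum_le_sum fun j (_ : j ∈ Finset.univ) => h1 j
  rw [Finset.sum_sub_distrib] at h2
  simp at h2
  linarith

theorem fti_fiber (k m : ℕ) (M r lam B : ℝ) (hM : 0 < M) (hr : 0 < r) (hk : 1 ≤ k)
    (v : ℕ → ℝ) (hv : Monotone v) (hv0 : v 0 = -(k * M)) (hvm : v m = M)
    (hlam : 0 < lam) (hlB : lam * B ≤ 1) (hB : ∀ l ≤ m, |v l| ≤ B)
    (D : Finset (Fin k × Fin (m + 1)))
    (hD : ∀ t : {t : Fin k → Fin (m + 1) // k * r ≤ ∑ j, v (t j)}, ∃ j, (j, t.1 j) ∉ D) :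
    ∑ a ∈ D, ftiNu (fun l => Real.exp (lam * v l)) (a.2 : ℕ) ≤
      k * (1 + lam * r + lam ^ 2 * B ^ 2) := by
  classical
  set u : ℕ → ℝ := fun l => Real.exp (lam * v l) with hu
  have hum : Monotone u := fun a b hab =>
    Real.exp_le_exp.2 (mul_le_mul_of_nonneg_left (hv hab) hlam.le)
  have hν := ftiNu_nonneg u hum (Real.exp_pos _).le
  have hk0 : (0 : ℝ) < k := by exact_mod_cast hk
  have hex : ∀ j : Fin k, ∃ l : Fin (m + 1), ((j, l) ∈ D ∨ (l : ℕ) = 0) ∧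
      ∑ a ∈ D with a.1 = j, ftiNu u (a.2 : ℕ) ≤ u l := by
    intro j
    rcases Finset.eq_empty_or_nonempty (D.filter fun a => a.1 = j) with h | h
    · exact ⟨0, Or.inr rfl, by rw [h]; simpa using (Real.exp_pos _).le⟩
    · obtain ⟨a, ha, hmax⟩ := Finset.exists_max_image _ (fun a => a.2) h
      obtain ⟨haD, haj⟩ := Finset.mem_filter.1 ha
      refine ⟨a.2, Or.inl (by rw [← haj]; exact haD), ?_⟩
      rw [← ftiNu_sum_fin u m a.2]
      have hinj : Set.InjOn (fun a : Fin k × Fin (m + 1) => a.2)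
          (D.filter fun a => a.1 = j : Finset _) := by
        intro x hx y hy hxy
        simp only [Finset.coe_filter, Set.mem_ofPred_eq] at hx hy
        exact Prod.ext (hx.2.trans hy.2.symm) hxy
      rw [← Finset.sum_image (f := fun l : Fin (m + 1) => ftiNu u (l : ℕ)) hinj]
      refine Finset.sum_le_sum_of_subset_of_nonneg ?_ fun l _ _ => hν l
      intro l hl
      obtain ⟨b, hb, rfl⟩ := Finset.mem_image.1 hl
      exact Finset.mem_Iic.2 (hmax b hb)
  choose l hl1 hl2 using hex
  have hmean : ∑ j, v (l j) < k * r := by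
    by_contra hcon
    push Not at hcon
    obtain ⟨j, hj⟩ := hD ⟨l, hcon⟩
    have := fti_zero k m M hM v hv hv0 hvm l j ((hl1 j).resolve_left hj)
    have : 0 < k * r := by positivity
    linarith
  have hexp : ∀ j, u (l j) ≤ 1 + lam * v (l j) + lam ^ 2 * B ^ 2 := by
    intro j
    have hb := hB (l j) (by have := (l j).2; omega)
    have h1 : |lam * v (l j)| ≤ 1 := by
      rw [abs_mul, abs_of_pos hlam]
      exact (mul_le_mul_of_nonneg_left hb hlam.le).trans hlB
    have h2 := (abs_le.1 (Real.abs_exp_sub_one_sub_id_le h1)).2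
    have h3 : (lam * v (l j)) ^ 2 ≤ lam ^ 2 * B ^ 2 := by
      rw [mul_pow]
      gcongr ?_ * ?_
      exact sq_le_sq' (abs_le.1 hb).1 (abs_le.1 hb).2
    simp only [hu]
    linarith
  calc ∑ a ∈ D, ftiNu u (a.2 : ℕ) = ∑ j, ∑ a ∈ D with a.1 = j, ftiNu u (a.2 : ℕ) :=
        (Finset.sum_fiberwise D (fun a => a.1) _).symm
    _ ≤ ∑ j, (1 + lam * v (l j) + lam ^ 2 * B ^ 2) :=
        Finset.sum_le_sum fun j _ => (hl2 j).trans (hexp j)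
    _ = k * (1 + lam ^ 2 * B ^ 2) + lam * ∑ j, v (l j) := by
        rw [Finset.mul_sum]
        simp only [Finset.sum_add_distrib]
        simp; ring
    _ ≤ k * (1 + lam ^ 2 * B ^ 2) + lam * (k * r) := by gcongr
    _ = _ := by ring

theorem fti_div (n s c : ℕ) (h : n / (s + 1) < c) : n ≤ (s + 1) * c := by
  have := (Nat.div_lt_iff_lt_mul (Nat.succ_pos s)).1 h
  rw [mul_comm]
  exact this.le

set_option maxHeartbeats 2000000 in
theorem func_to_indep (k : ℕ) (hk : 1 ≤ k) (r R C : ℝ) (hr : 0 < r) (hrR : r < R)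
    (hRC : R ≤ C) (p q : ℝ≥0∞) (hp : 1 < p) (hq : 1 ≤ q) (hq' : q ≠ ⊤)
    (hpq : 1 / p + 1 / q = 1) :
    ∃ (c N : ℝ) (T : Finset (Fin k → ℝ)), 0 < c ∧ 0 < N ∧
      (∀ t ∈ T, r ≤ (1 / k : ℝ) * ∑ j, t j) ∧
      ∀ (Z : Type) [Fintype Z], N ≤ (Fintype.card Z : ℝ) →
        ∀ f : (Z → Fin k) → (Z → ℝ),
          (∀ ψ, Equidistributed k ψ → lpNorm p (f ψ) ≤ C ∧
            R * (Fintype.card Z : ℝ) ^ (1 / q).toReal ≤ ∑ z, f ψ z) →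
          ∃ t ∈ T, ∃ J : Finset Z, c * (Fintype.card Z : ℝ) ≤ J.card ∧
            ∀ σ : Z → Fin k, ∃ ψ : Z → Fin k, Equidistributed k ψ ∧
              (∀ z ∈ J, ψ z = σ z) ∧
              ∀ z ∈ J, t (σ z) * (Fintype.card Z : ℝ) ^ (-(1 / p).toReal) ≤ f ψ z := by
  classical
  have hk0 : (0 : ℝ) < k := by exact_mod_cast hk
  set ε : ℝ := (R - r) / 4 with hε
  have hε0 : 0 < ε := by rw [hε]; linarith
  obtain ⟨M, hM, htr⟩ := fti_trunc R C ε (by linarith) hε0 p q hp hq hpq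
  obtain ⟨m, v, hv, hv0, hvm, hlev⟩ := fti_level k M ε hM hε0
  set R' : ℝ := R - 2 * ε with hR'
  have hrR' : r < R' := by rw [hR', hε]; linarith
  set B : ℝ := (k + 1) * M with hBdef
  have hB0 : 0 < B := by positivity
  have hB : ∀ l ≤ m, |v l| ≤ B := by
    intro l hl
    have h1 := hv (Nat.zero_le l)
    have h2 := hv hl
    rw [hv0] at h1
    rw [hvm] at h2
    rw [abs_le, hBdef]
    constructor <;> nlinarith
  set lam : ℝ := min (1 / B) ((R' - r) / (2 * B ^ 2)) with hlam
  have hlam0 : 0 < lam := lt_min (by positivity) (div_pos (by linarith) (by positivity))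
  have hlB : lam * B ≤ 1 := by
    rw [← le_div_iff₀ hB0]; exact min_le_left _ _
  have hlB2 : lam * B ^ 2 ≤ (R' - r) / 2 := by
    have : lam ≤ (R' - r) / (2 * B ^ 2) := min_le_right _ _
    rw [le_div_iff₀ (by positivity)] at this
    linarith
  set u : ℕ → ℝ := fun l => Real.exp (lam * v l) with hu
  have hum : Monotone u := fun a b hab =>
    Real.exp_le_exp.2 (mul_le_mul_of_nonneg_left (hv hab) hlam0.le)
  have hν := ftiNu_nonneg u hum (Real.exp_pos _).le
  set κ : ℝ := k * (1 + lam * r + lam ^ 2 * B ^ 2) with hκ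
  have hκ0 : 0 ≤ κ := by positivity
  set X : ℝ := k * Real.exp (lam * R') with hX
  have hκX : κ < X := by
    rw [hκ, hX]
    gcongr
    have := Real.add_one_le_exp (lam * R')
    nlinarith
  set K : ℝ := ∑ a : Fin k × Fin (m + 1), ftiNu u (a.2 : ℕ) with hK
  have hK0 : 0 ≤ K := Finset.sum_nonneg fun a _ => hν _
  let T := {t : Fin k → Fin (m + 1) // k * r ≤ ∑ j, v (t j)}
  let pat : T → Fin k → Fin k × Fin (m + 1) := fun t j => (j, t.1 j)
  obtain ⟨y, s, N, hy0, hy1, hN⟩ := fti_numeric κ X (K * Fintype.card T) ((k : ℝ) ^ (2 * k)) k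
    hκ0 hκX (by positivity)
  refine ⟨1 / ((s + 1) * (Fintype.card T + 1)), max N k,
    Finset.univ.image (fun (t : T) j => v (t.1 j)), by positivity,
    lt_max_of_lt_right hk0, ?_, ?_⟩
  · intro t ht
    obtain ⟨t', _, rfl⟩ := Finset.mem_image.1 ht
    rw [one_div, le_inv_mul_iff₀ hk0]
    exact t'.2
  intro Z _ hZ f hf
  have hZN : N ≤ Fintype.card Z := by exact_mod_cast (le_max_left _ _).trans hZ
  have hZk : k ≤ Fintype.card Z := by exact_mod_cast (le_max_right _ _).trans hZ
  have hZ0 : 0 < Fintype.card Z := by omega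
  have hnpos : (0 : ℝ) < Fintype.card Z := by exact_mod_cast hZ0
  obtain ⟨n, hn⟩ : ∃ n, n = Fintype.card Z := ⟨_, rfl⟩
  obtain ⟨e⟩ : Nonempty (Z ≃ Fin n) := ⟨Fintype.equivFinOfCardEq hn.symm⟩
  set α : ℝ := (1 / p).toReal with hα
  choose lev hlev1 hlev2 using hlev
  let L : (Z → Fin k) → Z → Fin (m + 1) := fun ψ z => lev (f ψ z * (Fintype.card Z : ℝ) ^ α)
  let S : Finset (Z → Fin k) := Finset.univ.filter (fun ψ => Equidistributed k ψ)
  let P : (Z → Fin k) → Finset (Fin n → Fin k × Fin (m + 1)) := fun ψ =>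
    Fintype.piFinset (fun i => {ψ (e.symm i)} ×ˢ Finset.Iic (L ψ (e.symm i)))
  let F : Finset (Fin n → Fin k × Fin (m + 1)) := S.biUnion P
  have hmemP : ∀ ψ x, x ∈ P ψ → ∀ i, (x i).1 = ψ (e.symm i) ∧ (x i).2 ≤ L ψ (e.symm i) := by
    intro ψ x hx i
    have := Fintype.mem_piFinset.1 hx i
    rw [Finset.mem_product, Finset.mem_singleton, Finset.mem_Iic] at this
    exact this
  have hdisj : (S : Set (Z → Fin k)).PairwiseDisjoint P := by
    intro ψ _ φ _ hne
    refine Finset.disjoint_left.2 fun x hx hx' => hne ?_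
    funext z
    have h1 := (hmemP ψ x hx (e z)).1
    have h2 := (hmemP φ x hx' (e z)).1
    simp only [Equiv.symm_apply_apply] at h1 h2
    rw [← h1, h2]
  have hlow : X ^ n ≤ (∑ x ∈ F, ∏ i, ftiNu u ((x i).2 : ℕ)) *
      ((n : ℝ) ^ k * (k : ℝ) ^ (2 * k)) := by
    have h1 : ∀ ψ ∈ S, Real.exp (lam * R') ^ n ≤ ∑ x ∈ P ψ, ∏ i, ftiNu u ((x i).2 : ℕ) := by
      intro ψ hψ
      have hfψ := hf ψ (Finset.mem_filter.1 hψ).2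
      have hs := htr Z hZ0 (f ψ) hfψ.1 hfψ.2
      have h2 : ∑ x ∈ P ψ, ∏ i, ftiNu u ((x i).2 : ℕ) = ∏ i, u (L ψ (e.symm i)) := by
        have := Finset.prod_univ_sum
          (fun i : Fin n => ({ψ (e.symm i)} ×ˢ Finset.Iic (L ψ (e.symm i)) :
            Finset (Fin k × Fin (m + 1)))) (fun _ a => ftiNu u (a.2 : ℕ))
        rw [← this]
        refine Finset.prod_congr rfl fun i _ => ?_
        rw [Finset.sum_product, Finset.sum_singleton]
        exact ftiNu_sum_fin u m _
      have h3 : ∏ i, u (L ψ (e.symm i)) = ∏ z, u (L ψ z) :=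
        Equiv.prod_comp e.symm (fun z => u (L ψ z))
      rw [h2, h3]
      simp only [hu]
      rw [← Real.exp_sum, ← Real.exp_nat_mul]
      apply Real.exp_le_exp.2
      rw [← Finset.mul_sum]
      have h4 : R' * n ≤ ∑ z, v (L ψ z) := by
        have h5 := Finset.sum_le_sum fun z (_ : z ∈ Finset.univ) =>
          hlev1 (f ψ z * (Fintype.card Z : ℝ) ^ α)
        rw [Finset.sum_sub_distrib] at h5
        simp only [Finset.sum_const, Finset.card_univ, nsmul_eq_mul] at h5
        rw [hn, hR']
        linarith
      nlinarith
    have h2 : (S.card : ℝ) * Real.exp (lam * R') ^ n ≤ ∑ x ∈ F, ∏ i, ftiNu u ((x i).2 : ℕ) := by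
      rw [Finset.sum_biUnion hdisj, ← nsmul_eq_mul]
      exact Finset.card_nsmul_le_sum _ _ _ h1
    have h3 := fti_count k hk Z hZk S (fun ψ h => by simpa [S] using h)
    have h4 : (k : ℝ) ^ n ≤ S.card * (n : ℝ) ^ k * (k : ℝ) ^ (2 * k) := by
      rw [← hn] at h3; exact_mod_cast h3
    calc X ^ n = (k : ℝ) ^ n * Real.exp (lam * R') ^ n := by rw [hX, mul_pow]
      _ ≤ (S.card * (n : ℝ) ^ k * (k : ℝ) ^ (2 * k)) * Real.exp (lam * R') ^ n := by gcongr
      _ = (S.card * Real.exp (lam * R') ^ n) * ((n : ℝ) ^ k * (k : ℝ) ^ (2 * k)) := by ring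
      _ ≤ _ := by gcongr
  obtain ⟨J, τ, hJτ, hJ⟩ : ∃ J τ, FTIShatters pat F J τ ∧ n / (s + 1) < J.card := by
    by_contra hcon
    push Not at hcon
    have h1 := fti_pajor (fun a : Fin k × Fin (m + 1) => ftiNu u (a.2 : ℕ)) (fun a => hν _) pat
      κ K y hκ0 hK0 hy0 hy1
      (fun D hD => fti_fiber k m M r lam B hM hr hk v hv hv0 hvm hlam0 hlB hB D hD)
      le_rfl n F (n / (s + 1)) hcon
    have h2 := hN n (by omega)
    have h3 := mul_le_mul_of_nonneg_right h1
      (by positivity : 0 ≤ (n : ℝ) ^ k * (k : ℝ) ^ (2 * k))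
    linarith
  have hJ' : (n : ℝ) ≤ (s + 1) * J.card := by
    have h2 := fti_div n s J.card hJ
    exact_mod_cast h2
  obtain ⟨i0, _⟩ : J.Nonempty := Finset.card_pos.1 (lt_of_le_of_lt (Nat.zero_le _) hJ)
  have hT1 : (0 : ℝ) < Fintype.card T := by
    exact_mod_cast Fintype.card_pos_iff.2 ⟨τ i0⟩
  obtain ⟨t, _, ht⟩ := Finset.exists_le_card_fiber_of_nsmul_le_card_of_maps_to
    (s := J) (t := (Finset.univ : Finset T)) (f := τ) (b := (J.card : ℝ) / Fintype.card T)
    (fun _ _ => Finset.mem_univ _) ⟨τ i0, Finset.mem_univ _⟩ (by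
      rw [nsmul_eq_mul, Finset.card_univ, mul_div_cancel₀ _ hT1.ne'])
  refine ⟨fun j => v (t.1 j), Finset.mem_image.2 ⟨t, Finset.mem_univ _, rfl⟩,
    (J.filter fun i => τ i = t).map e.symm.toEmbedding, ?_, ?_⟩
  · rw [Finset.card_map]
    refine le_trans ?_ ht
    rw [← hn, one_div, inv_mul_le_iff₀ (by positivity)]
    calc (n : ℝ) ≤ (s + 1) * J.card := hJ'
      _ = (s + 1) * Fintype.card T * (J.card / Fintype.card T) := by field_simp
      _ ≤ _ := by gcongr; linarith
  intro σ
  obtain ⟨x, hxF, hx⟩ := hJτ (fun i => σ (e.symm i))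
  obtain ⟨ψ, hψS, hxψ⟩ := Finset.mem_biUnion.1 hxF
  have key : ∀ z ∈ (J.filter fun i => τ i = t).map e.symm.toEmbedding,
      ψ z = σ z ∧ t.1 (σ z) ≤ L ψ z := by
    intro z hz
    obtain ⟨i, hi, rfl⟩ := Finset.mem_map.1 hz
    obtain ⟨hiJ, hit⟩ := Finset.mem_filter.1 hi
    have h1 := hx i hiJ
    have h2 := hmemP ψ x hxψ i
    rw [h1, hit] at h2
    exact ⟨h2.1.symm, h2.2⟩
  refine ⟨ψ, (Finset.mem_filter.1 hψS).2, fun z hz => (key z hz).1, fun z hz => ?_⟩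
  have hle := (key z hz).2
  have hne : (t.1 (σ z) : ℕ) ≠ 0 := by
    intro h0
    have h1 := fti_zero k m M hM v hv hv0 hvm t.1 (σ z) h0
    have h2 := t.2
    have : 0 < k * r := by positivity
    linarith
  have hle' : (t.1 (σ z) : ℕ) ≤ (L ψ z : ℕ) := hle
  have hvg : v (L ψ z) ≤ f ψ z * (Fintype.card Z : ℝ) ^ α := hlev2 _ (by
    change (L ψ z : ℕ) ≠ 0
    omega)
  have hpow : (0 : ℝ) < (Fintype.card Z : ℝ) ^ α := Real.rpow_pos_of_pos hnpos _
  simp only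
  rw [Real.rpow_neg hnpos.le, ← div_eq_mul_inv, div_le_iff₀ hpow]
  exact (hv hle').trans hvg
end
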